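/- arXiv:2006.09210 — 4 statements merged into one kernel-verified Lean document; each statement's English description precedes it below -/
import Mathlib

section
/- Let (H,α) and (B,β) be Hom-bialgebras over a field k, and let (M,μ_M) and (N,ν_N) be (H,B)-Hom-Long dimodules. Then M⊗N, with automorphism μ_M⊗ν_N, H-action h·(m⊗n)=h₁·m⊗h₂·n, and B-coaction ρ(m⊗n)=β⁻²(m₋₁n₋₁)⊗(m₀⊗n₀), is again an (H,B)-Hom-Long dimodule; in particular the compatibility ρ(h·(m⊗n))=β((m⊗n)₋₁)⊗α(h)·(m⊗n)₀ holds for all h∈H, m∈M, n∈N. -/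
/-!
Every axiom for `M ⊗ N` is an identity between multilinear expressions in Sweedler components, so
it suffices to check it on pure tensors, once `Δ(h)`, `ρ(m)` and `ρ(n)` are regarded as arbitrary
elements of the tensor products they live in.

The module axioms hold because `Δ` is multiplicative, unital and commutes with `α`. For the
comodule axioms, `β` is a multiplicative automorphism, so `β⁻²(β(b)β(c)) = β(β⁻²(bc))`
(`symm_symm_mul_auto`), and `Δ`, `ε` are multiplicative and commute with `β⁻¹`. Hom-coassociativity
(`tensor_hom_coassoc`) follows by applying the map
`(b ⊗ b' ⊗ m) ⊗ (c ⊗ c' ⊗ n) ↦ β⁻²(bc) ⊗ β⁻²(b'c') ⊗ (m ⊗ n)` to the Hom-coassociativity of `M`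
and `N`. The Long compatibility (`tensor_compat`) reads
`β⁻²(β(m₋₁)β(n₋₁)) ⊗ (α(h₁)·m₀ ⊗ α(h₂)·n₀) = β(β⁻²(m₋₁n₋₁)) ⊗ α(h)·(m₀ ⊗ n₀)`,
which uses the compatibility of the two factors and `Δ ∘ α = (α ⊗ α) ∘ Δ`.
-/

open TensorProduct

/-- A Hom-bialgebra `(H, α)` over a field `k`. -/
structure HomBialgebra (k : Type*) [Field k] (H : Type*) [AddCommGroup H] [Module k H] where
  mul : H →ₗ[k] H →ₗ[k] H
  one : H
  comul : H →ₗ[k] H ⊗[k] H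
  counit : H →ₗ[k] k
  auto : H ≃ₗ[k] H
  auto_mul : ∀ h h' : H, auto (mul h h') = mul (auto h) (auto h')
  auto_one : auto one = one
  hom_assoc : ∀ h h' h'' : H, mul (auto h) (mul h' h'') = mul (mul h h') (auto h'')
  mul_one' : ∀ h : H, mul h one = auto h
  one_mul' : ∀ h : H, mul one h = auto h
  comul_auto : ∀ h : H,
    comul (auto h) = TensorProduct.map auto.toLinearMap auto.toLinearMap (comul h)
  counit_auto : ∀ h : H, counit (auto h) = counit h
  hom_coassoc : ∀ h : H,
    TensorProduct.map auto.toLinearMap comul (comul h)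
      = TensorProduct.assoc k H H H (TensorProduct.map comul auto.toLinearMap (comul h))
  counit_comul : ∀ h : H,
    TensorProduct.lid k H (TensorProduct.map counit (LinearMap.id : H →ₗ[k] H) (comul h)) = auto h
  comul_counit : ∀ h : H,
    TensorProduct.rid k H (TensorProduct.map (LinearMap.id : H →ₗ[k] H) counit (comul h)) = auto h
  comul_mul : ∀ h h' : H,
    comul (mul h h')
      = TensorProduct.map (TensorProduct.lift mul) (TensorProduct.lift mul)
          (TensorProduct.tensorTensorTensorComm k H H H H (comul h ⊗ₜ[k] comul h'))
  comul_one : comul one = one ⊗ₜ[k] one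
  counit_mul : ∀ h h' : H, counit (mul h h') = counit h * counit h'
  counit_one : counit one = 1

/-- A Hom-Hopf algebra: a Hom-bialgebra with an antipode. -/
structure HomHopf (k : Type*) [Field k] (H : Type*) [AddCommGroup H] [Module k H]
    extends HomBialgebra k H where
  antipode : H →ₗ[k] H
  antipode_left : ∀ h : H,
    TensorProduct.lift mul (TensorProduct.map antipode (LinearMap.id : H →ₗ[k] H) (comul h))
      = counit h • one
  antipode_right : ∀ h : H,
    TensorProduct.lift mul (TensorProduct.map (LinearMap.id : H →ₗ[k] H) antipode (comul h))
      = counit h • one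
  antipode_auto : ∀ h : H, antipode (auto h) = auto (antipode h)

/-- A quasitriangular Hom-Hopf algebra `(H, α, R)`. -/
structure QTHomHopf (k : Type*) [Field k] (H : Type*) [AddCommGroup H] [Module k H]
    extends HomHopf k H where
  R : H ⊗[k] H
  qha1a : TensorProduct.lid k H (TensorProduct.map counit (LinearMap.id : H →ₗ[k] H) R) = one
  qha1b : TensorProduct.rid k H (TensorProduct.map (LinearMap.id : H →ₗ[k] H) counit R) = one
  qha2 : TensorProduct.map comul auto.toLinearMap R
      = TensorProduct.map (TensorProduct.map auto.toLinearMap auto.toLinearMap)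
          (TensorProduct.lift mul)
          (TensorProduct.tensorTensorTensorComm k H H H H (R ⊗ₜ[k] R))
  qha3 : TensorProduct.map auto.toLinearMap comul R
      = TensorProduct.map (TensorProduct.lift mul)
          ((TensorProduct.comm k H H).toLinearMap ∘ₗ
            TensorProduct.map auto.toLinearMap auto.toLinearMap)
          (TensorProduct.tensorTensorTensorComm k H H H H (R ⊗ₜ[k] R))
  qha4 : ∀ h : H,
    TensorProduct.map (TensorProduct.lift mul) (TensorProduct.lift mul)
        (TensorProduct.tensorTensorTensorComm k H H H H
          ((TensorProduct.comm k H H (comul h)) ⊗ₜ[k] R))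
      = TensorProduct.map (TensorProduct.lift mul) (TensorProduct.lift mul)
          (TensorProduct.tensorTensorTensorComm k H H H H (R ⊗ₜ[k] comul h))
  qha5 : TensorProduct.map auto.toLinearMap auto.toLinearMap R = R

/-- Triangularity: `R⁻¹ = R² ⊗ R¹`, i.e. `r²R¹ ⊗ r¹R² = 1 ⊗ 1`. -/
def QTHomHopf.IsTriangular {k : Type*} [Field k] {H : Type*} [AddCommGroup H] [Module k H]
    (HQ : QTHomHopf k H) : Prop :=
  TensorProduct.map (TensorProduct.lift HQ.mul) (TensorProduct.lift HQ.mul)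
      (TensorProduct.tensorTensorTensorComm k H H H H
        ((TensorProduct.comm k H H HQ.R) ⊗ₜ[k] HQ.R))
    = HQ.one ⊗ₜ[k] HQ.one

/-- A coquasitriangular Hom-Hopf algebra `(B, β, ⟨|⟩)`. -/
structure CQTHomHopf (k : Type*) [Field k] (B : Type*) [AddCommGroup B] [Module k B]
    extends HomHopf k B where
  form : B →ₗ[k] B →ₗ[k] k
  cha1 : ∀ h g l : B, form (mul h g) (auto l)
      = LinearMap.mul' k k (TensorProduct.map (form (auto g)) (form (auto h)) (comul l))
  cha2 : ∀ h g l : B, form (auto h) (mul g l)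
      = LinearMap.mul' k k
          (TensorProduct.map (form.flip (auto g)) (form.flip (auto l)) (comul h))
  cha3 : ∀ h g : B,
    TensorProduct.lid k B (TensorProduct.map (TensorProduct.lift form)
        ((TensorProduct.lift mul) ∘ₗ (TensorProduct.comm k B B).toLinearMap)
        (TensorProduct.tensorTensorTensorComm k B B B B (comul h ⊗ₜ[k] comul g)))
      = TensorProduct.rid k B
          (TensorProduct.map (TensorProduct.lift mul) (TensorProduct.lift form)
            (TensorProduct.tensorTensorTensorComm k B B B B (comul h ⊗ₜ[k] comul g)))
  cha4a : ∀ h : B, form one h = counit h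
  cha4b : ∀ h : B, form h one = counit h
  cha5 : ∀ h g : B, form (auto h) (auto g) = form h g

/-- Cotriangularity: `⟨h₁|g₁⟩⟨g₂|h₂⟩ = ε(h)ε(g)`. -/
def CQTHomHopf.IsCotriangular {k : Type*} [Field k] {B : Type*} [AddCommGroup B] [Module k B]
    (BC : CQTHomHopf k B) : Prop :=
  ∀ h g : B,
    LinearMap.mul' k k (TensorProduct.map (TensorProduct.lift BC.form)
        ((TensorProduct.lift BC.form) ∘ₗ (TensorProduct.comm k B B).toLinearMap)
        (TensorProduct.tensorTensorTensorComm k B B B B (BC.comul h ⊗ₜ[k] BC.comul g)))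
      = BC.counit h * BC.counit g

/-- A left Hom-module over a Hom-bialgebra `(H, α)`. -/
structure HomModule {k : Type*} [Field k] {H : Type*} [AddCommGroup H] [Module k H]
    (HA : HomBialgebra k H) (M : Type*) [AddCommGroup M] [Module k M] where
  act : H →ₗ[k] M →ₗ[k] M
  auto : M ≃ₗ[k] M
  auto_act : ∀ (h : H) (m : M), auto (act h m) = act (HA.auto h) (auto m)
  act_act : ∀ (h h' : H) (m : M), act (HA.auto h) (act h' m) = act (HA.mul h h') (auto m)
  one_act : ∀ m : M, act HA.one m = auto m

/-- A left Hom-comodule over a Hom-bialgebra `(B, β)`. -/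
structure HomComodule {k : Type*} [Field k] {B : Type*} [AddCommGroup B] [Module k B]
    (BA : HomBialgebra k B) (M : Type*) [AddCommGroup M] [Module k M] where
  coact : M →ₗ[k] B ⊗[k] M
  auto : M ≃ₗ[k] M
  coact_auto : ∀ m : M,
    coact (auto m) = TensorProduct.map BA.auto.toLinearMap auto.toLinearMap (coact m)
  counit_coact : ∀ m : M,
    TensorProduct.lid k M (TensorProduct.map BA.counit (LinearMap.id : M →ₗ[k] M) (coact m))
      = auto m
  hom_coassoc : ∀ m : M,
    TensorProduct.map BA.auto.toLinearMap coact (coact m)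
      = TensorProduct.assoc k B B M
          (TensorProduct.map BA.comul auto.toLinearMap (coact m))

/-- A Hom-algebra `(A, γ)`. -/
structure HomAlgebra (k : Type*) [Field k] (A : Type*) [AddCommGroup A] [Module k A] where
  mul : A →ₗ[k] A →ₗ[k] A
  one : A
  auto : A ≃ₗ[k] A
  auto_mul : ∀ a a' : A, auto (mul a a') = mul (auto a) (auto a')
  auto_one : auto one = one
  hom_assoc : ∀ a a' a'' : A, mul (auto a) (mul a' a'') = mul (mul a a') (auto a'')
  mul_one' : ∀ a : A, mul a one = auto a
  one_mul' : ∀ a : A, mul one a = auto a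

/-- A left Hom-module over a Hom-algebra `(A, γ)`. -/
structure HomModuleAlg {k : Type*} [Field k] {A : Type*} [AddCommGroup A] [Module k A]
    (AA : HomAlgebra k A) (M : Type*) [AddCommGroup M] [Module k M] where
  act : A →ₗ[k] M →ₗ[k] M
  auto : M ≃ₗ[k] M
  auto_act : ∀ (a : A) (m : M), auto (act a m) = act (AA.auto a) (auto m)
  act_act : ∀ (a a' : A) (m : M), act (AA.auto a) (act a' m) = act (AA.mul a a') (auto m)
  one_act : ∀ m : M, act AA.one m = auto m

/-- An `(H, B)`-Hom-Long dimodule. -/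
structure LongDimodule {k : Type*} [Field k] {H B : Type*}
    [AddCommGroup H] [Module k H] [AddCommGroup B] [Module k B]
    (HA : HomBialgebra k H) (BA : HomBialgebra k B)
    (M : Type*) [AddCommGroup M] [Module k M] where
  act : H →ₗ[k] M →ₗ[k] M
  coact : M →ₗ[k] B ⊗[k] M
  auto : M ≃ₗ[k] M
  auto_act : ∀ (h : H) (m : M), auto (act h m) = act (HA.auto h) (auto m)
  act_act : ∀ (h h' : H) (m : M), act (HA.auto h) (act h' m) = act (HA.mul h h') (auto m)
  one_act : ∀ m : M, act HA.one m = auto m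
  coact_auto : ∀ m : M,
    coact (auto m) = TensorProduct.map BA.auto.toLinearMap auto.toLinearMap (coact m)
  counit_coact : ∀ m : M,
    TensorProduct.lid k M (TensorProduct.map BA.counit (LinearMap.id : M →ₗ[k] M) (coact m))
      = auto m
  hom_coassoc : ∀ m : M,
    TensorProduct.map BA.auto.toLinearMap coact (coact m)
      = TensorProduct.assoc k B B M
          (TensorProduct.map BA.comul auto.toLinearMap (coact m))
  compat : ∀ (h : H) (m : M),
    coact (act h m)
      = TensorProduct.map BA.auto.toLinearMap (act (HA.auto h)) (coact m)

section Helpers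

variable {k H B M N : Type*} [Field k]
variable [AddCommGroup H] [Module k H] [AddCommGroup B] [Module k B]
variable [AddCommGroup M] [Module k M] [AddCommGroup N] [Module k N]

/-- The diagonal Hom-action on a tensor product: `h · (m ⊗ n) = h₁·m ⊗ h₂·n`. -/
noncomputable def tAct (comul : H →ₗ[k] H ⊗[k] H)
    (actM : H →ₗ[k] M →ₗ[k] M) (actN : H →ₗ[k] N →ₗ[k] N) :
    H →ₗ[k] (M ⊗[k] N) →ₗ[k] (M ⊗[k] N) :=
  TensorProduct.curry
    ((TensorProduct.map (TensorProduct.lift actM) (TensorProduct.lift actN)) ∘ₗ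
      (TensorProduct.tensorTensorTensorComm k H H M N).toLinearMap ∘ₗ
      (TensorProduct.map comul (LinearMap.id : M ⊗[k] N →ₗ[k] M ⊗[k] N)))

/-- The Hom-coaction on a tensor product: `ρ(m ⊗ n) = β⁻²(m₋₁ n₋₁) ⊗ (m₀ ⊗ n₀)`;
here `bInv2` stands for `β⁻²`. -/
noncomputable def tCoact (mulB : B →ₗ[k] B →ₗ[k] B) (bInv2 : B →ₗ[k] B)
    (coactM : M →ₗ[k] B ⊗[k] M) (coactN : N →ₗ[k] B ⊗[k] N) :
    (M ⊗[k] N) →ₗ[k] B ⊗[k] (M ⊗[k] N) :=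
  (TensorProduct.map (bInv2 ∘ₗ TensorProduct.lift mulB)
      (LinearMap.id : M ⊗[k] N →ₗ[k] M ⊗[k] N)) ∘ₗ
    (TensorProduct.tensorTensorTensorComm k B M B N).toLinearMap ∘ₗ
    (TensorProduct.map coactM coactN)

/-- `m ⊗ n ↦ R² · aM⁻¹(n) ⊗ R¹ · aN⁻¹(m)` (quasitriangular part of the Long braiding). -/
noncomputable def braidQT (R : H ⊗[k] H)
    (actM : H →ₗ[k] M →ₗ[k] M) (actN : H →ₗ[k] N →ₗ[k] N)
    (aM : M ≃ₗ[k] M) (aN : N ≃ₗ[k] N) : M ⊗[k] N →ₗ[k] N ⊗[k] M :=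
  TensorProduct.map (TensorProduct.lift actN) (TensorProduct.lift actM) ∘ₗ
    (TensorProduct.tensorTensorTensorComm k H H N M).toLinearMap ∘ₗ
    TensorProduct.mk k (H ⊗[k] H) (N ⊗[k] M) (TensorProduct.comm k H H R) ∘ₗ
    (TensorProduct.comm k M N).toLinearMap ∘ₗ
    TensorProduct.map aM.symm.toLinearMap aN.symm.toLinearMap

/-- `m ⊗ n ↦ ⟨m₋₁|n₋₁⟩ aN⁻¹(n₀) ⊗ aM⁻¹(m₀)` (coquasitriangular braiding). -/
noncomputable def braidCQT (form : B →ₗ[k] B →ₗ[k] k)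
    (coactM : M →ₗ[k] B ⊗[k] M) (coactN : N →ₗ[k] B ⊗[k] N)
    (aM : M ≃ₗ[k] M) (aN : N ≃ₗ[k] N) : M ⊗[k] N →ₗ[k] N ⊗[k] M :=
  (TensorProduct.comm k M N).toLinearMap ∘ₗ
    TensorProduct.map aM.symm.toLinearMap aN.symm.toLinearMap ∘ₗ
    (TensorProduct.lid k (M ⊗[k] N)).toLinearMap ∘ₗ
    TensorProduct.map (TensorProduct.lift form)
      (LinearMap.id : M ⊗[k] N →ₗ[k] M ⊗[k] N) ∘ₗ
    (TensorProduct.tensorTensorTensorComm k B M B N).toLinearMap ∘ₗ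
    TensorProduct.map coactM coactN

/-- The Long-dimodule braiding
`C(m ⊗ n) = ⟨m₋₁|n₋₁⟩ R² · aN⁻²(n₀) ⊗ R¹ · aM⁻²(m₀)`. -/
noncomputable def braidL (R : H ⊗[k] H) (form : B →ₗ[k] B →ₗ[k] k)
    (actM : H →ₗ[k] M →ₗ[k] M) (actN : H →ₗ[k] N →ₗ[k] N)
    (coactM : M →ₗ[k] B ⊗[k] M) (coactN : N →ₗ[k] B ⊗[k] N)
    (aM : M ≃ₗ[k] M) (aN : N ≃ₗ[k] N) : M ⊗[k] N →ₗ[k] N ⊗[k] M :=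
  braidQT R actM actN (aM.trans aM) (aN.trans aN) ∘ₗ
    (TensorProduct.lid k (M ⊗[k] N)).toLinearMap ∘ₗ
    TensorProduct.map (TensorProduct.lift form)
      (LinearMap.id : M ⊗[k] N →ₗ[k] M ⊗[k] N) ∘ₗ
    (TensorProduct.tensorTensorTensorComm k B M B N).toLinearMap ∘ₗ
    TensorProduct.map coactM coactN

/-- The action of `H ⊗ B` on a Long dimodule:
`(h ⊗ x) ⇀ m = ⟨x|m₋₁⟩ α⁻³(h) · μ⁻¹(m₀)`; `aInv3` stands for `α⁻³`, `muInv` for `μ⁻¹`. -/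
noncomputable def actHB (form : B →ₗ[k] B →ₗ[k] k) (aInv3 : H →ₗ[k] H)
    (act : H →ₗ[k] M →ₗ[k] M) (coact : M →ₗ[k] B ⊗[k] M) (muInv : M →ₗ[k] M) :
    (H ⊗[k] B) →ₗ[k] M →ₗ[k] M :=
  TensorProduct.curry
    ((TensorProduct.lid k M).toLinearMap ∘ₗ
      TensorProduct.map (TensorProduct.lift form)
        (TensorProduct.lift act ∘ₗ TensorProduct.map aInv3 muInv) ∘ₗ
      (TensorProduct.tensorTensorTensorComm k B H B M).toLinearMap ∘ₗ
      TensorProduct.map (TensorProduct.comm k H B).toLinearMap coact)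

/-- The coaction of `H ⊗ B` on a Long dimodule:
`ρ̄(m) = (R² ⊗ β⁻³(m₋₁)) ⊗ (R¹ · μ⁻¹(m₀))`; `bInv3` stands for `β⁻³`. -/
noncomputable def coactHB (R : H ⊗[k] H) (bInv3 : B →ₗ[k] B)
    (act : H →ₗ[k] M →ₗ[k] M) (coact : M →ₗ[k] B ⊗[k] M) (muInv : M →ₗ[k] M) :
    M →ₗ[k] (H ⊗[k] B) ⊗[k] M :=
  TensorProduct.map (TensorProduct.map (LinearMap.id : H →ₗ[k] H) bInv3)
      (TensorProduct.lift act ∘ₗ TensorProduct.map (LinearMap.id : H →ₗ[k] H) muInv) ∘ₗ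
    (TensorProduct.tensorTensorTensorComm k H H B M).toLinearMap ∘ₗ
    TensorProduct.mk k (H ⊗[k] H) (B ⊗[k] M) (TensorProduct.comm k H H R) ∘ₗ
    coact

end Helpers

section Assoc

variable {k U V W : Type*} [Field k]
variable [AddCommGroup U] [Module k U] [AddCommGroup V] [Module k V] [AddCommGroup W] [Module k W]

/-- The Hom-associator `(u ⊗ v) ⊗ w ↦ aU⁻¹(u) ⊗ (v ⊗ aW(w))`. -/
noncomputable def assocL (aU : U ≃ₗ[k] U) (aW : W ≃ₗ[k] W) :
    (U ⊗[k] V) ⊗[k] W →ₗ[k] U ⊗[k] (V ⊗[k] W) :=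
  TensorProduct.map aU.symm.toLinearMap
      (TensorProduct.map (LinearMap.id : V →ₗ[k] V) aW.toLinearMap) ∘ₗ
    (TensorProduct.assoc k U V W).toLinearMap

/-- The inverse Hom-associator `u ⊗ (v ⊗ w) ↦ (aU(u) ⊗ v) ⊗ aW⁻¹(w)`. -/
noncomputable def assocLinv (aU : U ≃ₗ[k] U) (aW : W ≃ₗ[k] W) :
    U ⊗[k] (V ⊗[k] W) →ₗ[k] (U ⊗[k] V) ⊗[k] W :=
  (TensorProduct.assoc k U V W).symm.toLinearMap ∘ₗ
    TensorProduct.map aU.toLinearMap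
      (TensorProduct.map (LinearMap.id : V →ₗ[k] V) aW.symm.toLinearMap)

end Assoc

section HomLongEq

variable {k M : Type*} [Field k] [AddCommGroup M] [Module k M]

/-- `F¹² = F ⊗ μ` on `M ⊗ (M ⊗ M)`. -/
noncomputable def f12 (μ : M ≃ₗ[k] M) (F : M ⊗[k] M →ₗ[k] M ⊗[k] M) :
    M ⊗[k] (M ⊗[k] M) →ₗ[k] M ⊗[k] (M ⊗[k] M) :=
  (TensorProduct.assoc k M M M).toLinearMap ∘ₗ
    TensorProduct.map F μ.toLinearMap ∘ₗ
    (TensorProduct.assoc k M M M).symm.toLinearMap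

/-- `F²³ = μ ⊗ F` on `M ⊗ (M ⊗ M)`. -/
noncomputable def f23 (μ : M ≃ₗ[k] M) (F : M ⊗[k] M →ₗ[k] M ⊗[k] M) :
    M ⊗[k] (M ⊗[k] M) →ₗ[k] M ⊗[k] (M ⊗[k] M) :=
  TensorProduct.map μ.toLinearMap F

/-- `F¹³ = (id ⊗ τ) ∘ (F ⊗ μ) ∘ (id ⊗ τ)` on `M ⊗ (M ⊗ M)`. -/
noncomputable def f13 (μ : M ≃ₗ[k] M) (F : M ⊗[k] M →ₗ[k] M ⊗[k] M) :
    M ⊗[k] (M ⊗[k] M) →ₗ[k] M ⊗[k] (M ⊗[k] M) :=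
  TensorProduct.map (LinearMap.id : M →ₗ[k] M) (TensorProduct.comm k M M).toLinearMap ∘ₗ
    f12 μ F ∘ₗ
    TensorProduct.map (LinearMap.id : M →ₗ[k] M) (TensorProduct.comm k M M).toLinearMap

/-- The cyclic permutation `τ⁽¹²³⁾ : x ⊗ y ⊗ z ↦ z ⊗ x ⊗ y`. -/
noncomputable def cyc123 (k M : Type*) [Field k] [AddCommGroup M] [Module k M] :
    M ⊗[k] (M ⊗[k] M) →ₗ[k] M ⊗[k] (M ⊗[k] M) :=
  (TensorProduct.comm k (M ⊗[k] M) M).toLinearMap ∘ₗ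
    (TensorProduct.assoc k M M M).symm.toLinearMap

end HomLongEq

section TensorLongDimodule

variable {k H B M N : Type*} [Field k]
variable [AddCommGroup H] [Module k H] [AddCommGroup B] [Module k B]
variable [AddCommGroup M] [Module k M] [AddCommGroup N] [Module k N]

/-- The map `d ⊗ (m ⊗ n) ↦ d₁·m ⊗ d₂·n` for an arbitrary `d = d₁ ⊗ d₂ ∈ H ⊗ H`; taking
`d = Δ(h)` gives the diagonal action. -/
noncomputable def act₂ (actM : H →ₗ[k] M →ₗ[k] M) (actN : H →ₗ[k] N →ₗ[k] N) :
    (H ⊗[k] H) →ₗ[k] (M ⊗[k] N) →ₗ[k] (M ⊗[k] N) :=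
  TensorProduct.curry
    ((TensorProduct.map (TensorProduct.lift actM) (TensorProduct.lift actN)) ∘ₗ
      (TensorProduct.tensorTensorTensorComm k H H M N).toLinearMap)

lemma act₂_tmul (actM : H →ₗ[k] M →ₗ[k] M) (actN : H →ₗ[k] N →ₗ[k] N) (a b : H) (m : M) (n : N) :
    act₂ actM actN (a ⊗ₜ b) (m ⊗ₜ n) = actM a m ⊗ₜ actN b n := by
  simp [act₂]

lemma tAct_eq (comul : H →ₗ[k] H ⊗[k] H)
    (actM : H →ₗ[k] M →ₗ[k] M) (actN : H →ₗ[k] N →ₗ[k] N) (h : H) :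
    tAct comul actM actN h = act₂ actM actN (comul h) := by
  ext m n
  simp [tAct, act₂]

/-- The map `(b ⊗ m) ⊗ (c ⊗ n) ↦ f(bc) ⊗ (m ⊗ n)`. -/
noncomputable def mulLegs (M N : Type*) [AddCommGroup M] [Module k M] [AddCommGroup N] [Module k N]
    (mulB : B →ₗ[k] B →ₗ[k] B) (f : B →ₗ[k] B) :
    (B ⊗[k] M) ⊗[k] (B ⊗[k] N) →ₗ[k] B ⊗[k] (M ⊗[k] N) :=
  (TensorProduct.map (f ∘ₗ TensorProduct.lift mulB)
      (LinearMap.id : M ⊗[k] N →ₗ[k] M ⊗[k] N)) ∘ₗ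
    (TensorProduct.tensorTensorTensorComm k B M B N).toLinearMap

lemma mulLegs_tmul (mulB : B →ₗ[k] B →ₗ[k] B) (f : B →ₗ[k] B) (b c : B) (m : M) (n : N) :
    mulLegs M N mulB f ((b ⊗ₜ m) ⊗ₜ (c ⊗ₜ n)) = f (mulB b c) ⊗ₜ (m ⊗ₜ n) := by
  simp [mulLegs]

lemma tCoact_tmul (mulB : B →ₗ[k] B →ₗ[k] B) (f : B →ₗ[k] B)
    (coactM : M →ₗ[k] B ⊗[k] M) (coactN : N →ₗ[k] B ⊗[k] N) (m : M) (n : N) :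
    tCoact mulB f coactM coactN (m ⊗ₜ n) = mulLegs M N mulB f (coactM m ⊗ₜ coactN n) := by
  simp [tCoact, mulLegs]

variable {HA : HomBialgebra k H} {BA : HomBialgebra k B}

lemma symm_symm_mul_auto (b c : B) :
    BA.auto.symm (BA.auto.symm (BA.mul (BA.auto b) (BA.auto c)))
      = BA.auto (BA.auto.symm (BA.auto.symm (BA.mul b c))) := by
  simp [← BA.auto_mul]

lemma counit_symm (b : B) : BA.counit (BA.auto.symm b) = BA.counit b := by
  rw [← BA.counit_auto, LinearEquiv.apply_symm_apply]

lemma comul_symm (b : B) :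
    BA.comul (BA.auto.symm b)
      = TensorProduct.map BA.auto.symm.toLinearMap BA.auto.symm.toLinearMap (BA.comul b) := by
  obtain ⟨c, rfl⟩ := BA.auto.surjective b
  rw [BA.comul_auto, LinearEquiv.symm_apply_apply, ← LinearMap.comp_apply,
    ← TensorProduct.map_comp]
  simp

variable (LM : LongDimodule HA BA M) (LN : LongDimodule HA BA N)

lemma tensor_auto_act (h : H) (x : M ⊗[k] N) :
    TensorProduct.congr LM.auto LN.auto (tAct HA.comul LM.act LN.act h x)
      = tAct HA.comul LM.act LN.act (HA.auto h) (TensorProduct.congr LM.auto LN.auto x) := by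
  rw [tAct_eq, tAct_eq, HA.comul_auto]
  generalize HA.comul h = d
  induction x using TensorProduct.induction_on with
  | zero => simp
  | add x y hx hy => simp only [map_add, hx, hy]
  | tmul m n =>
    induction d using TensorProduct.induction_on with
    | zero => simp
    | add x y hx hy => simp only [map_add, LinearMap.add_apply, hx, hy]
    | tmul a b => simp [act₂_tmul, LM.auto_act, LN.auto_act]

lemma tensor_act_act (h h' : H) (x : M ⊗[k] N) :
    tAct HA.comul LM.act LN.act (HA.auto h) (tAct HA.comul LM.act LN.act h' x)
      = tAct HA.comul LM.act LN.act (HA.mul h h') (TensorProduct.congr LM.auto LN.auto x) := by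
  rw [tAct_eq, tAct_eq, tAct_eq, HA.comul_auto, HA.comul_mul]
  generalize HA.comul h = d
  generalize HA.comul h' = e
  induction x using TensorProduct.induction_on with
  | zero => simp
  | add x y hx hy => simp only [map_add, hx, hy]
  | tmul m n =>
    induction d using TensorProduct.induction_on with
    | zero => simp
    | add x y hx hy => simp only [map_add, LinearMap.add_apply, TensorProduct.add_tmul, hx, hy]
    | tmul a b =>
      induction e using TensorProduct.induction_on with
      | zero => simp
      | add x y hx hy => simp only [map_add, LinearMap.add_apply, TensorProduct.tmul_add, hx, hy]
      | tmul c d => simp [act₂_tmul, LM.act_act, LN.act_act]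

lemma tensor_one_act (x : M ⊗[k] N) :
    tAct HA.comul LM.act LN.act HA.one x = TensorProduct.congr LM.auto LN.auto x := by
  rw [tAct_eq, HA.comul_one]
  induction x using TensorProduct.induction_on with
  | zero => simp
  | add x y hx hy => simp only [map_add, hx, hy]
  | tmul m n => simp [act₂_tmul, LM.one_act, LN.one_act]

/-- `β⁻²` on `B`. -/
local notation "β₂" => (BA.auto.symm.toLinearMap ∘ₗ BA.auto.symm.toLinearMap)

/-- Since `β⁻²` and `β` are multiplicative, `β⁻²(β(b)β(c)) ⊗ (f m ⊗ g n)` is the image of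
`β⁻²(bc) ⊗ (m ⊗ n)` under `β ⊗ (f ⊗ g)`. -/
lemma mulLegs_map_auto (f : M →ₗ[k] M) (g : N →ₗ[k] N) (u : B ⊗[k] M) (v : B ⊗[k] N) :
    mulLegs M N BA.mul β₂
        (TensorProduct.map BA.auto.toLinearMap f u ⊗ₜ TensorProduct.map BA.auto.toLinearMap g v)
      = TensorProduct.map BA.auto.toLinearMap (TensorProduct.map f g)
          (mulLegs M N BA.mul β₂ (u ⊗ₜ v)) := by
  have key : mulLegs M N BA.mul β₂ ∘ₗ TensorProduct.map
        (TensorProduct.map BA.auto.toLinearMap f) (TensorProduct.map BA.auto.toLinearMap g)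
      = TensorProduct.map BA.auto.toLinearMap (TensorProduct.map f g) ∘ₗ
          mulLegs M N BA.mul β₂ := by
    apply TensorProduct.ext_fourfold'
    intro b m c n
    simp only [LinearMap.comp_apply, TensorProduct.map_tmul, mulLegs_tmul, LinearEquiv.coe_coe,
      symm_symm_mul_auto]
  exact LinearMap.congr_fun key (u ⊗ₜ v)

lemma tensor_coact_auto (x : M ⊗[k] N) :
    tCoact BA.mul β₂ LM.coact LN.coact (TensorProduct.congr LM.auto LN.auto x)
      = TensorProduct.map BA.auto.toLinearMap (TensorProduct.congr LM.auto LN.auto).toLinearMap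
          (tCoact BA.mul β₂ LM.coact LN.coact x) := by
  induction x using TensorProduct.induction_on with
  | zero => simp
  | add x y hx hy => simp only [map_add, hx, hy]
  | tmul m n =>
    rw [TensorProduct.congr_tmul, tCoact_tmul, tCoact_tmul, LM.coact_auto, LN.coact_auto,
      mulLegs_map_auto]
    rfl

lemma tensor_counit_coact (x : M ⊗[k] N) :
    TensorProduct.lid k (M ⊗[k] N) (TensorProduct.map BA.counit LinearMap.id
        (tCoact BA.mul β₂ LM.coact LN.coact x))
      = TensorProduct.congr LM.auto LN.auto x := by
  have key : (TensorProduct.lid k (M ⊗[k] N)).toLinearMap ∘ₗ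
        TensorProduct.map BA.counit LinearMap.id ∘ₗ mulLegs M N BA.mul β₂
      = TensorProduct.map
          ((TensorProduct.lid k M).toLinearMap ∘ₗ TensorProduct.map BA.counit LinearMap.id)
          ((TensorProduct.lid k N).toLinearMap ∘ₗ TensorProduct.map BA.counit LinearMap.id) := by
    apply TensorProduct.ext_fourfold'
    intro b m c n
    simp [mulLegs_tmul, counit_symm, BA.counit_mul, TensorProduct.smul_tmul', smul_smul, mul_comm]
  induction x using TensorProduct.induction_on with
  | zero => simp
  | add x y hx hy => simp only [map_add, hx, hy]
  | tmul m n =>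
    rw [tCoact_tmul, TensorProduct.congr_tmul, ← LM.counit_coact, ← LN.counit_coact]
    exact LinearMap.congr_fun key (LM.coact m ⊗ₜ LN.coact n)

variable (BA) in
/-- Multiplying both `B`-legs of `(b ⊗ (b' ⊗ m)) ⊗ (c ⊗ (c' ⊗ n))`, with `β⁻²` applied to each
product: the result is `β⁻²(bc) ⊗ (β⁻²(b'c') ⊗ (m ⊗ n))`. -/
noncomputable def mulLegs₂ (M N : Type*)
    [AddCommGroup M] [Module k M] [AddCommGroup N] [Module k N] :
    (B ⊗[k] (B ⊗[k] M)) ⊗[k] (B ⊗[k] (B ⊗[k] N)) →ₗ[k] B ⊗[k] (B ⊗[k] (M ⊗[k] N)) :=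
  TensorProduct.map LinearMap.id (mulLegs M N BA.mul β₂) ∘ₗ
    mulLegs (B ⊗[k] M) (B ⊗[k] N) BA.mul β₂

lemma tensor_hom_coassoc (x : M ⊗[k] N) :
    TensorProduct.map BA.auto.toLinearMap (tCoact BA.mul β₂ LM.coact LN.coact)
        (tCoact BA.mul β₂ LM.coact LN.coact x)
      = TensorProduct.assoc k B B (M ⊗[k] N)
          (TensorProduct.map BA.comul (TensorProduct.congr LM.auto LN.auto).toLinearMap
            (tCoact BA.mul β₂ LM.coact LN.coact x)) := by
  -- Iterating the tensor coaction is merging the legs of the iterated coactions.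
  have left : TensorProduct.map BA.auto.toLinearMap (tCoact BA.mul β₂ LM.coact LN.coact) ∘ₗ
        mulLegs M N BA.mul β₂
      = mulLegs₂ BA M N ∘ₗ TensorProduct.map
          (TensorProduct.map BA.auto.toLinearMap LM.coact)
          (TensorProduct.map BA.auto.toLinearMap LN.coact) := by
    apply TensorProduct.ext_fourfold'
    intro b m c n
    simp only [mulLegs₂, LinearMap.comp_apply, TensorProduct.map_tmul, mulLegs_tmul,
      LinearEquiv.coe_coe, symm_symm_mul_auto, tCoact_tmul, LinearMap.id_apply]
  -- Comultiplying the merged leg is merging the legs after comultiplying.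
  have right : (TensorProduct.assoc k B B (M ⊗[k] N)).toLinearMap ∘ₗ
        TensorProduct.map BA.comul (TensorProduct.congr LM.auto LN.auto).toLinearMap ∘ₗ
          mulLegs M N BA.mul β₂
      = mulLegs₂ BA M N ∘ₗ TensorProduct.map
          ((TensorProduct.assoc k B B M).toLinearMap ∘ₗ
            TensorProduct.map BA.comul LM.auto.toLinearMap)
          ((TensorProduct.assoc k B B N).toLinearMap ∘ₗ
            TensorProduct.map BA.comul LN.auto.toLinearMap) := by
    apply TensorProduct.ext_fourfold'
    intro b m c n
    simp only [LinearMap.comp_apply, TensorProduct.map_tmul, mulLegs_tmul,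
      LinearEquiv.coe_coe, comul_symm, BA.comul_mul, TensorProduct.congr_tmul]
    generalize BA.comul b = d
    generalize BA.comul c = e
    induction d using TensorProduct.induction_on with
    | zero => simp
    | add x y hx hy => simp only [map_add, TensorProduct.add_tmul, hx, hy]
    | tmul a b =>
      induction e using TensorProduct.induction_on with
      | zero => simp
      | add x y hx hy => simp only [map_add, TensorProduct.add_tmul, TensorProduct.tmul_add, hx, hy]
      | tmul c d => simp [mulLegs₂, mulLegs_tmul]
  induction x using TensorProduct.induction_on with
  | zero => simp
  | add x y hx hy => simp only [map_add, hx, hy]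
  | tmul m n =>
    rw [tCoact_tmul]
    refine (LinearMap.congr_fun left (LM.coact m ⊗ₜ LN.coact n)).trans
      (Eq.trans ?_ (LinearMap.congr_fun right (LM.coact m ⊗ₜ LN.coact n)).symm)
    simp only [LinearMap.comp_apply, TensorProduct.map_tmul, LinearEquiv.coe_coe, LM.hom_coassoc,
      LN.hom_coassoc]

lemma tensor_compat (h : H) (x : M ⊗[k] N) :
    tCoact BA.mul β₂ LM.coact LN.coact (tAct HA.comul LM.act LN.act h x)
      = TensorProduct.map BA.auto.toLinearMap (tAct HA.comul LM.act LN.act (HA.auto h))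
          (tCoact BA.mul β₂ LM.coact LN.coact x) := by
  rw [tAct_eq, tAct_eq, HA.comul_auto]
  generalize HA.comul h = d
  induction x using TensorProduct.induction_on with
  | zero => simp
  | add x y hx hy => simp only [map_add, hx, hy]
  | tmul m n =>
    induction d using TensorProduct.induction_on with
    | zero => simp
    | add x y hx hy =>
      simp only [map_add, LinearMap.add_apply, TensorProduct.map_add_right, hx, hy]
    | tmul a b =>
      have e : act₂ LM.act LN.act (HA.auto a ⊗ₜ HA.auto b)
          = TensorProduct.map (LM.act (HA.auto a)) (LN.act (HA.auto b)) := by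
        ext m n
        simp [act₂_tmul]
      rw [act₂_tmul, tCoact_tmul, tCoact_tmul, LM.compat, LN.compat, mulLegs_map_auto,
        TensorProduct.map_tmul, LinearEquiv.coe_coe, e]

end TensorLongDimodule

/-- the tensor product of two `(H,B)`-Hom-Long dimodules is again an
`(H,B)`-Hom-Long dimodule, with the diagonal action, the tensor coaction
`ρ(m ⊗ n) = β⁻²(m₋₁ n₋₁) ⊗ (m₀ ⊗ n₀)` and automorphism `μ_M ⊗ ν_N`; in particular the
Long compatibility condition holds. -/
theorem tensor_LongDimodule
    {k H B M N : Type*} [Field k]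
    [AddCommGroup H] [Module k H] [AddCommGroup B] [Module k B]
    [AddCommGroup M] [Module k M] [AddCommGroup N] [Module k N]
    (HA : HomBialgebra k H) (BA : HomBialgebra k B)
    (LM : LongDimodule HA BA M) (LN : LongDimodule HA BA N) :
    ∃ L : LongDimodule HA BA (M ⊗[k] N),
      L.act = tAct HA.comul LM.act LN.act ∧
      L.coact = tCoact BA.mul (BA.auto.symm.toLinearMap ∘ₗ BA.auto.symm.toLinearMap)
          LM.coact LN.coact ∧
      L.auto = TensorProduct.congr LM.auto LN.auto ∧
      (∀ (h : H) (x : M ⊗[k] N),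
        tCoact BA.mul (BA.auto.symm.toLinearMap ∘ₗ BA.auto.symm.toLinearMap) LM.coact LN.coact
            (tAct HA.comul LM.act LN.act h x)
          = TensorProduct.map BA.auto.toLinearMap (tAct HA.comul LM.act LN.act (HA.auto h))
              (tCoact BA.mul (BA.auto.symm.toLinearMap ∘ₗ BA.auto.symm.toLinearMap)
                LM.coact LN.coact x)) := by
  exact ⟨{ act := tAct HA.comul LM.act LN.act
           coact := tCoact BA.mul (BA.auto.symm.toLinearMap ∘ₗ BA.auto.symm.toLinearMap)
             LM.coact LN.coact
           auto := TensorProduct.congr LM.auto LN.auto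
           auto_act := tensor_auto_act LM LN
           act_act := tensor_act_act LM LN
           one_act := tensor_one_act LM LN
           coact_auto := tensor_coact_auto LM LN
           counit_coact := tensor_counit_coact LM LN
           hom_coassoc := tensor_hom_coassoc LM LN
           compat := tensor_compat LM LN }, rfl, rfl, rfl, tensor_compat LM LN⟩
end

section
/- Let (H,α) and (B,β) be Hom-Hopf algebras over k with bijective antipodes S_H and S_B, and let (M,·,ρ,μ) be a finite-dimensional (H,B)-Hom-Long dimodule. Then the dual space M*=Hom_k(M,k), equipped with the automorphism μ*(f)=f∘μ⁻¹, the H-action defined by (h·f)(m)=f(S_H(α⁻¹(h))·μ⁻²(m)), and the B-coaction ρ*:M*→B⊗M* uniquely determined by the requirement that, writing ρ*(f)=f₋₁⊗f₀, one has f₋₁·f₀(m)=S_B⁻¹(β⁻¹(m₋₁))·f(μ⁻²(m₀)) in B for all m∈M, is an (H,B)-Hom-Long dimodule. -/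
/-!
The module axioms for `M*` need `S_H` to be unital and anti-multiplicative, the comodule axioms need
`S_B⁻¹` to preserve the counit and to reverse the comultiplication. All of these are facts about
ordinary Hopf algebras: since `α` is bijective, `a * b = α⁻¹(ab)` and `Δ' = (α⁻¹ ⊗ α⁻¹)Δ` turn a
Hom-Hopf algebra into an ordinary one with the same unit, counit and antipode
(`HomHopf.untwistHopf`), and the identities are transported back (`HomHopf.antipode_mul`,
`HomHopf.antipode_one`, `HomHopf.counit_antipode`, `HomHopf.comul_antipode`). For an ordinary Hopf
algebra the formula `Δ(S(c)) = S(c₂) ⊗ S(c₁)` (`comul_antipode_eq`) holds because the two sides are a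
right and a left convolution inverse of `Δ`.

As `M` is finite-dimensional, `V ⊗ M* ≃ Hom(M, V)`. This gives existence and uniqueness of the dual
coaction, and reduces each axiom about it to an equality after evaluating the `M*` leg at a vector
`m` (`eq_of_evalRight_eq`). Evaluated there, the axioms for `M*` become those for `M`. In
Hom-coassociativity both sides equal `S⁻¹β⁻²(m₀₋₁) ⊗ S⁻¹β⁻¹(m₋₁) f(μ⁻⁴(m₀₀))`.
-/

open TensorProduct

/-! ### Antipodes of ordinary Hopf algebras -/

section OrdinaryHopf

open Coalgebra Bialgebra HopfAlgebra WithConv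

/-- In an ordinary Hopf algebra, `c ↦ S(c₂) ⊗ S(c₁)` is a left convolution inverse of the
comultiplication: `S(c₂)c₃ ⊗ S(c₁)c₄ = 1 ⊗ S(c₁)c₂ = ε(c) 1 ⊗ 1`. -/
lemma antipode_comm_comul_mul_comul (R C : Type*) [CommSemiring R] [Semiring C] [HopfAlgebra R C] :
    toConv (TensorProduct.map (antipode R) (antipode R) ∘ₗ
      (TensorProduct.comm R C C).toLinearMap ∘ₗ comul) * toConv (comul (R := R) (A := C)) = 1 := by
  -- `Ψ ((a ⊗ b) ⊗ (c ⊗ d)) = S(b)c ⊗ S(a)d`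
  let Ψ : (C ⊗[R] C) ⊗[R] (C ⊗[R] C) →ₗ[R] C ⊗[R] C :=
    LinearMap.mul' R (C ⊗[R] C) ∘ₗ TensorProduct.map
      (TensorProduct.map (antipode R) (antipode R) ∘ₗ (TensorProduct.comm R C C).toLinearMap)
      LinearMap.id
  have hΨ : ∀ a b c d : C, Ψ ((a ⊗ₜ b) ⊗ₜ (c ⊗ₜ d)) = (antipode R b * c) ⊗ₜ (antipode R a * d) :=
    fun a b c d => by simp [Ψ]
  -- `Ω (a ⊗ ((b ⊗ c) ⊗ d)) = S(b)c ⊗ S(a)d`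
  let Ω : C ⊗[R] ((C ⊗[R] C) ⊗[R] C) →ₗ[R] C ⊗[R] C :=
    Ψ ∘ₗ (TensorProduct.assoc R C C (C ⊗[R] C)).symm.toLinearMap ∘ₗ
      (TensorProduct.assoc R C C C).toLinearMap.lTensor C
  have hΩ : ∀ (a d : C) (x : C ⊗[R] C), Ω (a ⊗ₜ (x ⊗ₜ d)) =
      (LinearMap.mul' R C ((antipode R).rTensor C x)) ⊗ₜ (antipode R a * d) := by
    intro a d x
    induction x with
    | zero => simp
    | add x y hx hy => simp only [map_add, add_tmul, tmul_add, hx, hy]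
    | tmul b c => simp [Ω, hΨ]
  have hΩ' : ∀ (a : C) (x : C ⊗[R] C), Ω (a ⊗ₜ (comul.rTensor C x)) =
      1 ⊗ₜ (antipode R a * TensorProduct.lid R C (counit.rTensor C x)) := by
    intro a x
    induction x with
    | zero => simp
    | add x y hx hy => simp only [map_add, mul_add, tmul_add, hx, hy]
    | tmul b d =>
      simp [hΩ, Algebra.algebraMap_eq_smul_one, smul_tmul]
  have key : ∀ x : C ⊗[R] C, Ψ (TensorProduct.map comul comul x) =
      Ψ ((comul.lTensor (C ⊗[R] C)) (comul.rTensor C x)) := by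
    intro x
    rw [← LinearMap.comp_apply (LinearMap.lTensor _ _), LinearMap.lTensor_comp_rTensor]
  have key2 : ∀ x : C ⊗[R] (C ⊗[R] C),
      (comul.lTensor (C ⊗[R] C)) ((TensorProduct.assoc R C C C).symm x) =
      (TensorProduct.assoc R C C (C ⊗[R] C)).symm ((comul.lTensor C).lTensor C x) := by
    intro x
    induction x with
    | zero => simp
    | add x y hx hy => simp only [map_add, hx, hy]
    | tmul a x =>
      induction x with
      | zero => simp
      | add x y hx hy => simp only [map_add, tmul_add, hx, hy]
      | tmul b c => simp
  have key3 : ∀ x : C ⊗[R] C,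
      Ψ ((TensorProduct.assoc R C C (C ⊗[R] C)).symm ((comul.lTensor C).lTensor C
        (comul.lTensor C x))) = 1 ⊗ₜ (LinearMap.mul' R C ((antipode R).rTensor C x)) := by
    intro x
    induction x with
    | zero => simp
    | add x y hx hy => simp only [map_add, tmul_add, hx, hy]
    | tmul a c =>
      have := hΩ' a (comul c)
      rw [rTensor_counit_comul] at this
      simpa [Ω] using this
  apply WithConv.ext
  refine LinearMap.ext fun c => ?_
  have h1 : Ψ (TensorProduct.map comul comul (comul c)) = algebraMap R _ (counit c) := by
    rw [key, ← coassoc_symm_apply, key2, key3, mul_antipode_rTensor_comul_apply,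
      Algebra.algebraMap_eq_smul_one, Algebra.algebraMap_eq_smul_one, tmul_smul]
    rfl
  refine Eq.trans ?_ h1
  simp only [LinearMap.convMul_def, Ψ, LinearMap.comp_apply]
  congr 1
  change TensorProduct.map _ comul (comul c) = _
  generalize comul (R := R) c = x
  induction x with
  | zero => simp
  | add x y hx hy => simp only [map_add, hx, hy]
  | tmul a b => simp

/-- The antipode of an ordinary Hopf algebra reverses the comultiplication. -/
lemma comul_antipode_eq (R C : Type*) [CommSemiring R] [Semiring C] [HopfAlgebra R C] (c : C) :
    comul (R := R) (antipode R c) = TensorProduct.map (antipode R) (antipode R)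
      (TensorProduct.comm R C C (comul c)) := by
  have h := left_inv_eq_right_inv (antipode_comm_comul_mul_comul R C)
    (LinearMap.comul_right_inv (R := R) (C := C))
  exact (LinearMap.congr_fun (congrArg WithConv.ofConv h) c).symm

end OrdinaryHopf

/-! ### Untwisting a Hom-Hopf algebra -/

section Untwist

variable {k H : Type*} [Field k] [AddCommGroup H] [Module k H]

namespace HomHopf

lemma auto_symm_mul (A : HomHopf k H) (a b : H) :
    A.auto.symm (A.mul a b) = A.mul (A.auto.symm a) (A.auto.symm b) := by
  rw [LinearEquiv.symm_apply_eq, A.auto_mul]; simp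

lemma antipode_auto_symm (A : HomHopf k H) (a : H) :
    A.antipode (A.auto.symm a) = A.auto.symm (A.antipode a) := by
  rw [LinearEquiv.eq_symm_apply, ← A.antipode_auto]; simp

/-- The ordinary ring obtained by untwisting a Hom-Hopf algebra: `a * b = α⁻¹(ab)`. -/
@[reducible] def untwistRing (A : HomHopf k H) : Ring H :=
  { (inferInstance : AddCommGroup H) with
    mul := fun a b => A.auto.symm (A.mul a b)
    one := A.one
    left_distrib := fun a b c => by
      change A.auto.symm (A.mul a (b + c)) = A.auto.symm (A.mul a b) + A.auto.symm (A.mul a c)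
      simp
    right_distrib := fun a b c => by
      change A.auto.symm (A.mul (a + b) c) = A.auto.symm (A.mul a c) + A.auto.symm (A.mul b c)
      simp
    zero_mul := fun a => by change A.auto.symm (A.mul 0 a) = 0; simp
    mul_zero := fun a => by change A.auto.symm (A.mul a 0) = 0; simp
    one_mul := fun a => by change A.auto.symm (A.mul A.one a) = a; simp [A.one_mul']
    mul_one := fun a => by change A.auto.symm (A.mul a A.one) = a; simp [A.mul_one']
    mul_assoc := fun a b c => by
      change A.auto.symm (A.mul (A.auto.symm (A.mul a b)) c) =
        A.auto.symm (A.mul a (A.auto.symm (A.mul b c)))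
      have := A.hom_assoc (A.auto.symm a) (A.auto.symm b) (A.auto.symm c)
      simp only [LinearEquiv.apply_symm_apply] at this
      rw [A.auto_symm_mul a b, A.auto_symm_mul b c, this] }

/-- The algebra structure on the untwisted ring. -/
@[reducible] def untwistAlgebra (A : HomHopf k H) :
    letI := A.untwistRing
    Algebra k H :=
  letI := A.untwistRing
  Algebra.ofModule
    (fun r a b => by
      change A.auto.symm (A.mul (r • a) b) = r • A.auto.symm (A.mul a b)
      simp)
    (fun r a b => by
      change A.auto.symm (A.mul a (r • b)) = r • A.auto.symm (A.mul a b)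
      simp)

lemma comul_auto_symm (A : HomHopf k H) (a : H) : A.comul (A.auto.symm a) =
    TensorProduct.map A.auto.symm.toLinearMap A.auto.symm.toLinearMap (A.comul a) := by
  have h := A.comul_auto (A.auto.symm a)
  rw [LinearEquiv.apply_symm_apply] at h
  rw [h, ← LinearMap.comp_apply, ← TensorProduct.map_comp]
  simp

lemma counit_auto_symm (A : HomHopf k H) (a : H) : A.counit (A.auto.symm a) = A.counit a := by
  rw [← A.counit_auto, LinearEquiv.apply_symm_apply]

/-- The coalgebra obtained by untwisting a Hom-Hopf algebra:
`Δ'(h) = α⁻¹(h₁) ⊗ α⁻¹(h₂)`. -/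
@[reducible] noncomputable def untwistCoalgebra (A : HomHopf k H) : Coalgebra k H where
  comul := TensorProduct.map A.auto.symm.toLinearMap A.auto.symm.toLinearMap ∘ₗ A.comul
  counit := A.counit
  coassoc := by
    let a := A.auto.symm.toLinearMap
    -- both sides are `α⁻² ⊗ α⁻² ⊗ α⁻²` applied to one side of Hom-coassociativity
    have h1 : ∀ x : H ⊗[k] H, TensorProduct.assoc k H H H
        ((TensorProduct.map a a ∘ₗ A.comul).rTensor H (TensorProduct.map a a x)) =
        TensorProduct.map (a ∘ₗ a) (TensorProduct.map (a ∘ₗ a) (a ∘ₗ a))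
          (TensorProduct.assoc k H H H (TensorProduct.map A.comul A.auto.toLinearMap x)) := by
      intro x
      induction x with
      | zero => simp
      | add x y hx hy => simp only [map_add, hx, hy]
      | tmul b c =>
        simp only [a, TensorProduct.map_tmul, LinearMap.rTensor_tmul, LinearMap.comp_apply,
          LinearEquiv.coe_coe, comul_auto_symm]
        generalize A.comul b = y
        induction y with
        | zero => simp
        | add x y hx hy => simp only [map_add, add_tmul, hx, hy]
        | tmul d e => simp
    have h2 : ∀ x : H ⊗[k] H,
        ((TensorProduct.map a a ∘ₗ A.comul).lTensor H (TensorProduct.map a a x)) =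
        TensorProduct.map (a ∘ₗ a) (TensorProduct.map (a ∘ₗ a) (a ∘ₗ a))
          (TensorProduct.map A.auto.toLinearMap A.comul x) := by
      intro x
      induction x with
      | zero => simp
      | add x y hx hy => simp only [map_add, hx, hy]
      | tmul b c =>
        simp only [a, TensorProduct.map_tmul, LinearMap.lTensor_tmul, LinearMap.comp_apply,
          LinearEquiv.coe_coe, comul_auto_symm]
        generalize A.comul c = y
        induction y with
        | zero => simp
        | add x y hx hy => simp only [map_add, tmul_add, hx, hy]
        | tmul d e => simp
    refine LinearMap.ext fun h => ?_
    exact (h1 (A.comul h)).trans ((congrArg _ (A.hom_coassoc h).symm).trans (h2 (A.comul h)).symm)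
  rTensor_counit_comp_comul := by
    refine LinearMap.ext fun h => (TensorProduct.lid k H).injective ?_
    have h1 : ∀ x : H ⊗[k] H, TensorProduct.lid k H (A.counit.rTensor H
        (TensorProduct.map A.auto.symm.toLinearMap A.auto.symm.toLinearMap x)) =
        A.auto.symm (TensorProduct.lid k H (TensorProduct.map A.counit LinearMap.id x)) := by
      intro x
      induction x with
      | zero => simp
      | add x y hx hy => simp only [map_add, hx, hy]
      | tmul b c => simp [counit_auto_symm]
    refine (h1 (A.comul h)).trans ?_
    rw [A.counit_comul]
    simp
  lTensor_counit_comp_comul := by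
    refine LinearMap.ext fun h => (TensorProduct.rid k H).injective ?_
    have h1 : ∀ x : H ⊗[k] H, TensorProduct.rid k H (A.counit.lTensor H
        (TensorProduct.map A.auto.symm.toLinearMap A.auto.symm.toLinearMap x)) =
        A.auto.symm (TensorProduct.rid k H (TensorProduct.map LinearMap.id A.counit x)) := by
      intro x
      induction x with
      | zero => simp
      | add x y hx hy => simp only [map_add, hx, hy]
      | tmul b c => simp [counit_auto_symm]
    refine (h1 (A.comul h)).trans ?_
    rw [A.comul_counit]
    simp

/-- The ordinary Hopf algebra obtained by untwisting a Hom-Hopf algebra; the antipode is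
unchanged. -/
@[reducible] noncomputable def untwistHopf (A : HomHopf k H) :
    letI := A.untwistRing
    HopfAlgebra k H :=
  letI := A.untwistRing
  letI := A.untwistAlgebra
  letI := A.untwistCoalgebra
  letI : Bialgebra k H := Bialgebra.mk' k H A.counit_one
    (fun {a b} => (A.counit_auto_symm _).trans (A.counit_mul a b))
    (by
      change TensorProduct.map A.auto.symm.toLinearMap A.auto.symm.toLinearMap (A.comul A.one) =
        A.one ⊗ₜ A.one
      rw [A.comul_one, TensorProduct.map_tmul, LinearEquiv.coe_coe,
        (LinearEquiv.symm_apply_eq _).2 A.auto_one.symm])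
    (fun {a b} => by
      change TensorProduct.map A.auto.symm.toLinearMap A.auto.symm.toLinearMap
          (A.comul (A.auto.symm (A.mul a b))) =
        TensorProduct.map A.auto.symm.toLinearMap A.auto.symm.toLinearMap (A.comul a) *
        TensorProduct.map A.auto.symm.toLinearMap A.auto.symm.toLinearMap (A.comul b)
      rw [comul_auto_symm, A.comul_mul]
      generalize A.comul a = x
      generalize A.comul b = y
      induction x with
      | zero => simp
      | add x x' hx hy => simp only [map_add, add_tmul, add_mul, hx, hy]
      | tmul c d =>
        induction y with
        | zero => simp
        | add y y' hx hy => simp only [map_add, tmul_add, mul_add, hx, hy]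
        | tmul e f =>
          simp only [TensorProduct.map_tmul, TensorProduct.tensorTensorTensorComm_tmul,
            TensorProduct.lift.tmul, LinearEquiv.coe_coe, Algebra.TensorProduct.tmul_mul_tmul,
            auto_symm_mul]
          congr 1
          · exact (A.auto_symm_mul _ _).symm
          · exact (A.auto_symm_mul _ _).symm)
  { antipode := A.antipode
    mul_antipode_rTensor_comul := by
      have h1 : ∀ x : H ⊗[k] H, LinearMap.mul' k H (A.antipode.rTensor H
          (TensorProduct.map A.auto.symm.toLinearMap A.auto.symm.toLinearMap x)) =
          A.auto.symm (A.auto.symm (TensorProduct.lift A.mul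
            (TensorProduct.map A.antipode LinearMap.id x))) := by
        intro x
        induction x with
        | zero => simp
        | add x y hx hy => simp only [map_add, hx, hy]
        | tmul b c =>
          simp only [TensorProduct.map_tmul, LinearMap.rTensor_tmul, LinearMap.mul'_apply,
            TensorProduct.lift.tmul, LinearEquiv.coe_coe, antipode_auto_symm, LinearMap.id_apply]
          exact congrArg _ (A.auto_symm_mul _ _).symm
      refine LinearMap.ext fun h => (h1 (A.comul h)).trans ?_
      rw [A.antipode_left, map_smul, map_smul, (LinearEquiv.symm_apply_eq _).2 A.auto_one.symm,
        (LinearEquiv.symm_apply_eq _).2 A.auto_one.symm]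
      exact (Algebra.algebraMap_eq_smul_one _).symm
    mul_antipode_lTensor_comul := by
      have h1 : ∀ x : H ⊗[k] H, LinearMap.mul' k H (A.antipode.lTensor H
          (TensorProduct.map A.auto.symm.toLinearMap A.auto.symm.toLinearMap x)) =
          A.auto.symm (A.auto.symm (TensorProduct.lift A.mul
            (TensorProduct.map LinearMap.id A.antipode x))) := by
        intro x
        induction x with
        | zero => simp
        | add x y hx hy => simp only [map_add, hx, hy]
        | tmul b c =>
          simp only [TensorProduct.map_tmul, LinearMap.lTensor_tmul, LinearMap.mul'_apply,
            TensorProduct.lift.tmul, LinearEquiv.coe_coe, antipode_auto_symm, LinearMap.id_apply]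
          exact congrArg _ (A.auto_symm_mul _ _).symm
      refine LinearMap.ext fun h => (h1 (A.comul h)).trans ?_
      rw [A.antipode_right, map_smul, map_smul, (LinearEquiv.symm_apply_eq _).2 A.auto_one.symm,
        (LinearEquiv.symm_apply_eq _).2 A.auto_one.symm]
      exact (Algebra.algebraMap_eq_smul_one _).symm }

lemma antipode_mul (A : HomHopf k H) (a b : H) :
    A.antipode (A.mul a b) = A.mul (A.antipode b) (A.antipode a) := by
  let := A.untwistRing
  let := A.untwistHopf
  have h : A.antipode (A.auto.symm (A.mul a b)) =
      A.auto.symm (A.mul (A.antipode b) (A.antipode a)) :=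
    HopfAlgebra.antipode_mul_antidistrib (R := k) a b
  rw [antipode_auto_symm] at h
  exact A.auto.symm.injective h

lemma antipode_one (A : HomHopf k H) : A.antipode A.one = A.one := by
  let := A.untwistRing
  let := A.untwistHopf
  exact HopfAlgebra.antipode_one (R := k) (A := H)

lemma counit_antipode (A : HomHopf k H) (a : H) : A.counit (A.antipode a) = A.counit a := by
  let := A.untwistRing
  let := A.untwistHopf
  exact HopfAlgebra.counit_antipode (R := k) a

lemma comul_antipode (A : HomHopf k H) (a : H) :
    A.comul (A.antipode a) = TensorProduct.map A.antipode A.antipode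
      (TensorProduct.comm k H H (A.comul a)) := by
  let := A.untwistRing
  let := A.untwistHopf
  have h : TensorProduct.map A.auto.symm.toLinearMap A.auto.symm.toLinearMap
        (A.comul (A.antipode a)) =
      TensorProduct.map A.antipode A.antipode (TensorProduct.comm k H H
        (TensorProduct.map A.auto.symm.toLinearMap A.auto.symm.toLinearMap (A.comul a))) :=
    comul_antipode_eq k H a
  apply (TensorProduct.congr A.auto.symm A.auto.symm).injective
  refine h.trans ?_
  generalize A.comul a = x
  induction x with
  | zero => simp
  | add x y hx hy => simp only [map_add, hx, hy]
  | tmul b c => simp [antipode_auto_symm]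

end HomHopf

end Untwist

/-! ### Partial evaluation on `V ⊗ M*` -/

section Pairing

variable {k V W M : Type*} [Field k] [AddCommGroup V] [Module k V] [AddCommGroup W] [Module k W]
  [AddCommGroup M] [Module k M]

/-- The partial evaluation `V ⊗ M* → V`, `v ⊗ f ↦ f(m) v`, at a vector `m`. -/
noncomputable def evalRight (V : Type*) [AddCommGroup V] [Module k V] (m : M) :
    V ⊗[k] Module.Dual k M →ₗ[k] V :=
  (TensorProduct.rid k V).toLinearMap ∘ₗ
    TensorProduct.map (LinearMap.id : V →ₗ[k] V) (Module.Dual.eval k M m)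

@[simp]
lemma evalRight_tmul (m : M) (v : V) (f : Module.Dual k M) :
    evalRight V m (v ⊗ₜ[k] f) = f m • v := by
  simp [evalRight]

lemma evalRight_map (g : V →ₗ[k] W) (φ : Module.Dual k M →ₗ[k] Module.Dual k M) (m m' : M)
    (h : ∀ f, φ f m = f m') (x : V ⊗[k] Module.Dual k M) :
    evalRight W m (TensorProduct.map g φ x) = g (evalRight V m' x) := by
  induction x with
  | zero => simp
  | add x y hx hy => simp only [map_add, hx, hy]
  | tmul v f => simp [h]

lemma evalRight_eq_dualTensorHom (m : M) (x : V ⊗[k] Module.Dual k M) :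
    evalRight V m x = dualTensorHom k M V (TensorProduct.comm k _ _ x) m := by
  induction x with
  | zero => simp
  | add x y hx hy => simp only [map_add, hx, hy, LinearMap.add_apply]
  | tmul v f => simp

/-- For finite-dimensional `M`, an element of `V ⊗ M*` is determined by its partial evaluations;
this is the injectivity of `V ⊗ M* ≃ Hom(M, V)`. -/
lemma eq_of_evalRight_eq [FiniteDimensional k M] {x y : V ⊗[k] Module.Dual k M}
    (h : ∀ m : M, evalRight V m x = evalRight V m y) : x = y := by
  apply (TensorProduct.comm k _ _).injective
  apply (dualTensorHomEquiv k M V).injective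
  refine LinearMap.ext fun m => ?_
  have := h m
  rw [evalRight_eq_dualTensorHom, evalRight_eq_dualTensorHom] at this
  exact this

/-- The contraction `V ⊗ M → W`, `v ⊗ m ↦ f(m) g(v)`, as a linear function of `f`. -/
noncomputable def applyRight (g : V →ₗ[k] W) : Module.Dual k M →ₗ[k] V ⊗[k] M →ₗ[k] W where
  toFun f := (TensorProduct.rid k W).toLinearMap ∘ₗ TensorProduct.map g f
  map_add' f f' := by ext; simp [add_smul]
  map_smul' r f := by ext; simp [mul_smul]

@[simp]
lemma applyRight_tmul (g : V →ₗ[k] W) (f : Module.Dual k M) (v : V) (m : M) :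
    applyRight g f (v ⊗ₜ[k] m) = f m • g v := by
  simp [applyRight]

end Pairing

/-! ### The dual action and coaction -/

section Dual

variable {k H B M : Type*} [Field k]
  [AddCommGroup H] [Module k H] [AddCommGroup B] [Module k B]
  [AddCommGroup M] [Module k M]

/-- The linear map `m ↦ s(m₋₁) f(μ⁻²(m₀))` from `M` to `B` that the dual coaction of `f`
has to represent. It is linear in `f`. -/
noncomputable def dualCoactHom (s : B →ₗ[k] B) (ρ : M →ₗ[k] B ⊗[k] M) (μ : M ≃ₗ[k] M) :
    Module.Dual k M →ₗ[k] M →ₗ[k] B :=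
  LinearMap.lcomp k B ρ ∘ₗ applyRight s ∘ₗ
    LinearMap.lcomp k k (μ.symm.toLinearMap ∘ₗ μ.symm.toLinearMap)

lemma dualCoactHom_apply (s : B →ₗ[k] B) (ρ : M →ₗ[k] B ⊗[k] M) (μ : M ≃ₗ[k] M)
    (f : Module.Dual k M) (m : M) : dualCoactHom s ρ μ f m =
      applyRight s (f ∘ₗ μ.symm.toLinearMap ∘ₗ μ.symm.toLinearMap) (ρ m) := rfl

/-- The dual coaction `M* → B ⊗ M*`, the image of `dualCoactHom` under
`Hom(M, B) ≃ M* ⊗ B ≃ B ⊗ M*`. -/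
noncomputable def dualCoact [FiniteDimensional k M] (s : B →ₗ[k] B) (ρ : M →ₗ[k] B ⊗[k] M)
    (μ : M ≃ₗ[k] M) : Module.Dual k M →ₗ[k] B ⊗[k] Module.Dual k M :=
  (TensorProduct.comm k _ _).toLinearMap ∘ₗ (dualTensorHomEquiv k M B).symm.toLinearMap ∘ₗ
    dualCoactHom s ρ μ

lemma evalRight_dualCoact [FiniteDimensional k M] (s : B →ₗ[k] B) (ρ : M →ₗ[k] B ⊗[k] M)
    (μ : M ≃ₗ[k] M) (f : Module.Dual k M) (m : M) :
    evalRight B m (dualCoact s ρ μ f) = dualCoactHom s ρ μ f m := by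
  rw [evalRight_eq_dualTensorHom]
  simp [dualCoact]

/-- The dual action `(h·f)(m) = f(σ(h)·μ⁻²(m))`, where `σ` stands for `S ∘ α⁻¹`. -/
noncomputable def dualAct (σ : H →ₗ[k] H) (act : H →ₗ[k] M →ₗ[k] M) (μ : M ≃ₗ[k] M) :
    H →ₗ[k] Module.Dual k M →ₗ[k] Module.Dual k M :=
  LinearMap.mk₂ k (fun h f => f ∘ₗ act (σ h) ∘ₗ μ.symm.toLinearMap ∘ₗ μ.symm.toLinearMap)
    (fun h h' f => by ext; simp) (fun r h f => by ext; simp)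
    (fun h f f' => by ext; simp) (fun r h f => by ext; simp)

@[simp]
lemma dualAct_apply (σ : H →ₗ[k] H) (act : H →ₗ[k] M →ₗ[k] M) (μ : M ≃ₗ[k] M) (h : H)
    (f : Module.Dual k M) (m : M) :
    dualAct σ act μ h f m = f (act (σ h) (μ.symm (μ.symm m))) := rfl

lemma LongDimodule.auto_symm_act {HA : HomBialgebra k H} {BA : HomBialgebra k B}
    (LM : LongDimodule HA BA M) (h : H) (m : M) :
    LM.auto.symm (LM.act h m) = LM.act (HA.auto.symm h) (LM.auto.symm m) := by
  rw [LinearEquiv.symm_apply_eq, LM.auto_act]; simp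

lemma LongDimodule.coact_auto_symm {HA : HomBialgebra k H} {BA : HomBialgebra k B}
    (LM : LongDimodule HA BA M) (m : M) :
    LM.coact (LM.auto.symm m) = TensorProduct.map BA.auto.symm.toLinearMap
      LM.auto.symm.toLinearMap (LM.coact m) := by
  have h := LM.coact_auto (LM.auto.symm m)
  rw [LinearEquiv.apply_symm_apply] at h
  rw [h, ← LinearMap.comp_apply, ← TensorProduct.map_comp]
  simp

/-- Evaluating the last leg of `(b ⊗ ρ*) x` at `m` gives `b(F(μ⁻²(m₀))) ⊗ s(m₋₁)`, where `F : M → B`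
is the linear map corresponding to `x ∈ B ⊗ M*`. -/
lemma evalRight_assoc_map_dualCoact [FiniteDimensional k M] (b s : B →ₗ[k] B)
    (ρ : M →ₗ[k] B ⊗[k] M) (μ : M ≃ₗ[k] M) (F : M →ₗ[k] B) (m : M)
    (x : B ⊗[k] Module.Dual k M) (hx : ∀ n, evalRight B n x = F n) :
    evalRight (B ⊗[k] B) m ((TensorProduct.assoc k B B _).symm
      (TensorProduct.map b (dualCoact s ρ μ) x)) =
    TensorProduct.map (b ∘ₗ F ∘ₗ μ.symm.toLinearMap ∘ₗ μ.symm.toLinearMap) s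
      (TensorProduct.comm k B M (ρ m)) := by
  obtain rfl : F = dualTensorHom k M B (TensorProduct.comm k _ _ x) := by
    ext n; rw [← hx, evalRight_eq_dualTensorHom]
  clear hx
  have h1 : ∀ (c : B) (z : B ⊗[k] Module.Dual k M),
      evalRight (B ⊗[k] B) m ((TensorProduct.assoc k B B _).symm (c ⊗ₜ z)) =
        c ⊗ₜ evalRight B m z := by
    intro c z
    induction z with
    | zero => simp
    | add x y hx hy => simp only [map_add, tmul_add, hx, hy]
    | tmul d f => simp
  induction x with
  | zero => simp
  | add x y hx hy =>
    simp only [map_add, hx, hy, LinearMap.add_comp, LinearMap.comp_add, TensorProduct.map_add_left,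
      LinearMap.add_apply]
  | tmul c f =>
    rw [TensorProduct.map_tmul, h1, evalRight_dualCoact, dualCoactHom_apply]
    generalize ρ m = y
    induction y with
    | zero => simp
    | add x y hx hy => simp only [map_add, tmul_add, hx, hy]
    | tmul d n => simp [smul_tmul]

end Dual

/-! ### The inverse antipode -/

section AntipodeInverse

variable {k B : Type*} [Field k] [AddCommGroup B] [Module k B] (BA : HomHopf k B)
  (SB : B ≃ₗ[k] B)

lemma antipodeInv_auto_symm (hSB : SB.toLinearMap = BA.antipode) (b : B) :
    SB.symm (BA.auto.symm b) = BA.auto.symm (SB.symm b) := by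
  have h := BA.antipode_auto_symm (SB.symm b)
  rw [← hSB] at h
  rw [LinearEquiv.symm_apply_eq]
  simpa using h.symm

lemma counit_antipodeInv (hSB : SB.toLinearMap = BA.antipode) (b : B) :
    BA.counit (SB.symm b) = BA.counit b := by
  rw [← BA.counit_antipode, ← hSB]; simp

lemma comul_antipodeInv (hSB : SB.toLinearMap = BA.antipode) (b : B) : BA.comul (SB.symm b) =
    TensorProduct.map SB.symm.toLinearMap SB.symm.toLinearMap
      (TensorProduct.comm k B B (BA.comul b)) := by
  have h := BA.comul_antipode (SB.symm b)
  rw [← hSB, LinearEquiv.coe_coe, LinearEquiv.apply_symm_apply] at h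
  rw [h]
  generalize BA.comul (SB.symm b) = y
  induction y with
  | zero => simp
  | add x y hx hy => simp only [map_add] at hx hy ⊢; rw [← hx, ← hy]
  | tmul c d => simp

end AntipodeInverse

/-! ### The dual Hom-Long dimodule -/

section Main

variable {k H B M : Type*} [Field k]
  [AddCommGroup H] [Module k H] [AddCommGroup B] [Module k B]
  [AddCommGroup M] [Module k M] [FiniteDimensional k M]

/-- The dual of a finite-dimensional Hom-Long dimodule; `SB` is the antipode of `B`, bundled as
a linear equivalence so that its inverse is available. -/
noncomputable def dualLong (HA : HomHopf k H) (BA : HomHopf k B)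
    (SB : B ≃ₗ[k] B) (hSB : SB.toLinearMap = BA.antipode)
    (LM : LongDimodule HA.toHomBialgebra BA.toHomBialgebra M) :
    LongDimodule HA.toHomBialgebra BA.toHomBialgebra (Module.Dual k M) where
  act := dualAct (HA.antipode ∘ₗ HA.auto.symm.toLinearMap) LM.act LM.auto
  coact := dualCoact (SB.symm.toLinearMap ∘ₗ BA.auto.symm.toLinearMap) LM.coact LM.auto
  auto := LM.auto.symm.dualMap
  auto_act h f := by
    ext m
    simp [LM.auto_symm_act, HA.antipode_auto_symm]
  act_act h h' f := by
    ext m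
    have := LM.act_act (HA.auto.symm (HA.auto.symm (HA.antipode h')))
      (HA.auto.symm (HA.auto.symm (HA.antipode h)))
      (LM.auto.symm (LM.auto.symm (LM.auto.symm (LM.auto.symm m))))
    simp only [LinearEquiv.apply_symm_apply] at this
    simp [LM.auto_symm_act, HA.antipode_auto_symm, HA.antipode_mul, HA.auto_symm_mul, this]
  one_act f := by
    ext m
    simp [(LinearEquiv.symm_apply_eq _).2 HA.auto_one.symm, HA.antipode_one, LM.one_act]
  coact_auto f := by
    have hS := antipodeInv_auto_symm BA SB hSB
    refine eq_of_evalRight_eq fun m => ?_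
    rw [evalRight_dualCoact, evalRight_map _ _ m (LM.auto.symm m) (fun f => by simp),
      evalRight_dualCoact, dualCoactHom_apply, dualCoactHom_apply, LM.coact_auto_symm]
    generalize LM.coact m = y
    induction y with
    | zero => simp
    | add x y hx hy => simp only [map_add, hx, hy]
    | tmul b n => simp [hS]
  counit_coact f := by
    ext m
    have hε := counit_antipodeInv BA SB hSB
    have h1 : ∀ x : B ⊗[k] Module.Dual k M,
        TensorProduct.lid k _ (TensorProduct.map BA.counit LinearMap.id x) m =
          BA.counit (evalRight B m x) := by
      intro x
      induction x with
      | zero => simp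
      | add x y hx hy => simp only [map_add, hx, hy, LinearMap.add_apply]
      | tmul b f => simp [mul_comm]
    have h2 : ∀ y : B ⊗[k] M, BA.counit (applyRight
        (SB.symm.toLinearMap ∘ₗ BA.auto.symm.toLinearMap)
        (f ∘ₗ LM.auto.symm.toLinearMap ∘ₗ LM.auto.symm.toLinearMap) y) =
        f (LM.auto.symm (LM.auto.symm (TensorProduct.lid k _
          (TensorProduct.map BA.counit LinearMap.id y)))) := by
      intro y
      induction y with
      | zero => simp
      | add x y hx hy => simp only [map_add, hx, hy]
      | tmul b n => simp [hε, BA.counit_auto_symm, mul_comm]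
    rw [h1, evalRight_dualCoact, dualCoactHom_apply, h2, LM.counit_coact]
    simp
  hom_coassoc f := by
    have hS := antipodeInv_auto_symm BA SB hSB
    have hΔ := comul_antipodeInv BA SB hSB
    set s := SB.symm.toLinearMap ∘ₗ BA.auto.symm.toLinearMap with hs
    set t := s ∘ₗ BA.auto.symm.toLinearMap with ht
    let f4 : Module.Dual k M := f ∘ₗ LM.auto.symm.toLinearMap ∘ₗ LM.auto.symm.toLinearMap ∘ₗ
      LM.auto.symm.toLinearMap ∘ₗ LM.auto.symm.toLinearMap
    apply (TensorProduct.assoc k B B (Module.Dual k M)).symm.injective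
    rw [LinearEquiv.symm_apply_apply]
    refine eq_of_evalRight_eq fun m => ?_
    rw [evalRight_assoc_map_dualCoact _ _ _ _ (dualCoactHom s LM.coact LM.auto f) m _
        (evalRight_dualCoact s LM.coact LM.auto f),
      evalRight_map _ _ m (LM.auto.symm m) (fun f => by simp),
      evalRight_dualCoact, dualCoactHom_apply, LM.coact_auto_symm]
    -- both sides equal `t(m₀₋₁) ⊗ t(β(m₋₁)) f(μ⁻⁴(m₀₀))` with `t = S⁻¹β⁻²`
    have h1 : ∀ y : B ⊗[k] M, TensorProduct.map (BA.auto.toLinearMap ∘ₗ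
        dualCoactHom s LM.coact LM.auto f ∘ₗ LM.auto.symm.toLinearMap ∘ₗ LM.auto.symm.toLinearMap) s
        (TensorProduct.comm k B M y) =
        applyRight (TensorProduct.map t t ∘ₗ (TensorProduct.comm k B B).toLinearMap) f4
          ((TensorProduct.assoc k B B M).symm
            (TensorProduct.map BA.auto.toLinearMap LM.coact y)) := by
      intro y
      induction y with
      | zero => simp
      | add x y hx hy => simp only [map_add, hx, hy]
      | tmul b n =>
        simp only [TensorProduct.comm_tmul, TensorProduct.map_tmul, LinearMap.comp_apply,
          LinearEquiv.coe_coe, dualCoactHom_apply, LM.coact_auto_symm]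
        generalize LM.coact n = z
        induction z with
        | zero => simp
        | add x y hx hy => simp only [map_add, add_tmul, tmul_add, hx, hy]
        | tmul c p => simp [ht, hs, f4, hS, smul_tmul']
    have h2 : ∀ y : B ⊗[k] M, BA.comul (applyRight s
        (f ∘ₗ LM.auto.symm.toLinearMap ∘ₗ LM.auto.symm.toLinearMap)
        (TensorProduct.map BA.auto.symm.toLinearMap LM.auto.symm.toLinearMap y)) =
        applyRight (TensorProduct.map t t ∘ₗ (TensorProduct.comm k B B).toLinearMap) f4
          (TensorProduct.map BA.comul LM.auto.toLinearMap y) := by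
      intro y
      induction y with
      | zero => simp
      | add x y hx hy => simp only [map_add, hx, hy]
      | tmul b n =>
        simp only [TensorProduct.map_tmul, applyRight_tmul, hs, f4, LinearMap.comp_apply,
          LinearEquiv.coe_coe, map_smul, hΔ, BA.comul_auto_symm, LinearEquiv.symm_apply_apply]
        congr 1
        generalize BA.comul b = z
        induction z with
        | zero => simp
        | add x y hx hy => simp only [map_add, hx, hy]
        | tmul c d => simp [ht, hs]
    rw [h1, h2, LM.hom_coassoc, LinearEquiv.symm_apply_apply]
  compat h f := by
    have hS := antipodeInv_auto_symm BA SB hSB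
    refine eq_of_evalRight_eq fun m => ?_
    rw [evalRight_dualCoact, evalRight_map _ _ m
      (LM.act (HA.antipode h) (LM.auto.symm (LM.auto.symm m))) (fun f => by simp),
      evalRight_dualCoact, dualCoactHom_apply, dualCoactHom_apply, LM.compat, LM.coact_auto_symm,
      LM.coact_auto_symm]
    generalize LM.coact m = y
    induction y with
    | zero => simp
    | add x y hx hy => simp only [map_add, hx, hy]
    | tmul b n => simp [hS, LM.auto_symm_act, HA.antipode_auto_symm]

end Main

/-- the dual of a finite-dimensional `(H,B)`-Hom-Long dimodule is again an
`(H,B)`-Hom-Long dimodule, with `μ*(f) = f∘μ⁻¹`, `(h·f)(m) = f(S_H(α⁻¹(h))·μ⁻²(m))`,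
and coaction uniquely determined by
`f₋₁ · f₀(m) = S_B⁻¹(β⁻¹(m₋₁)) · f(μ⁻²(m₀))`. -/
theorem dual_LongDimodule
    {k H B M : Type*} [Field k]
    [AddCommGroup H] [Module k H] [AddCommGroup B] [Module k B]
    [AddCommGroup M] [Module k M] [FiniteDimensional k M]
    (HA : HomHopf k H) (BA : HomHopf k B)
    (SH : H ≃ₗ[k] H) (hSH : SH.toLinearMap = HA.antipode)
    (SB : B ≃ₗ[k] B) (hSB : SB.toLinearMap = BA.antipode)
    (LM : LongDimodule HA.toHomBialgebra BA.toHomBialgebra M) :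
    ∃ L : LongDimodule HA.toHomBialgebra BA.toHomBialgebra (Module.Dual k M),
      (∀ (f : Module.Dual k M) (m : M), L.auto f m = f (LM.auto.symm m)) ∧
      (∀ (h : H) (f : Module.Dual k M) (m : M),
        L.act h f m
          = f (LM.act (HA.antipode (HA.auto.symm h)) (LM.auto.symm (LM.auto.symm m)))) ∧
      (∀ (f : Module.Dual k M) (m : M),
        TensorProduct.rid k B
            (TensorProduct.map (LinearMap.id : B →ₗ[k] B) (Module.Dual.eval k M m)
              (L.coact f))
          = TensorProduct.rid k B
              (TensorProduct.map (SB.symm.toLinearMap ∘ₗ BA.auto.symm.toLinearMap)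
                (f ∘ₗ LM.auto.symm.toLinearMap ∘ₗ LM.auto.symm.toLinearMap)
                (LM.coact m))) ∧
      (∀ ρ' : Module.Dual k M →ₗ[k] B ⊗[k] Module.Dual k M,
        (∀ (f : Module.Dual k M) (m : M),
          TensorProduct.rid k B
              (TensorProduct.map (LinearMap.id : B →ₗ[k] B) (Module.Dual.eval k M m) (ρ' f))
            = TensorProduct.rid k B
                (TensorProduct.map (SB.symm.toLinearMap ∘ₗ BA.auto.symm.toLinearMap)
                  (f ∘ₗ LM.auto.symm.toLinearMap ∘ₗ LM.auto.symm.toLinearMap)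
                  (LM.coact m))) → ρ' = L.coact) := by
  refine ⟨dualLong HA BA SB hSB LM, fun f m => rfl, fun h f m => rfl, fun f m => ?_, fun ρ' h => ?_⟩
  · exact evalRight_dualCoact (SB.symm.toLinearMap ∘ₗ BA.auto.symm.toLinearMap)
      LM.coact LM.auto f m
  · refine LinearMap.ext fun f => eq_of_evalRight_eq fun m => ?_
    exact (h f m).trans (evalRight_dualCoact (SB.symm.toLinearMap ∘ₗ BA.auto.symm.toLinearMap)
      LM.coact LM.auto f m).symm
end

section
/- Let (H,α,R) be a quasitriangular Hom-Hopf algebra, (B,β,⟨|⟩) a coquasitriangular Hom-Hopf algebra, and (M,μ_M),(N,ν_N) (H,B)-Hom-Long dimodules. Then the map C_{M,N}:M⊗N→N⊗M, C_{M,N}(m⊗n)=⟨m₋₁|n₋₁⟩ R²·ν_N⁻²(n₀)⊗R¹·μ_M⁻²(m₀), is left H-linear for the diagonal actions: for all h∈H, C_{M,N}∘λ_h^{M⊗N}=λ_h^{N⊗M}∘C_{M,N}, where λ_h^{X⊗Y}(x⊗y)=h₁·x⊗h₂·y. -/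
/-!
Write `t ▷ (x ⊗ y) = t¹·x ⊗ t²·y` for `t : H ⊗ H` (`pairAct`), so that the diagonal action of `h`
is `Δ(h) ▷ -`, and let `F(m ⊗ n) = ⟨m₋₁|n₋₁⟩ m₀ ⊗ n₀` (`formContract`). The braiding is then
`C(w) = τ(R) ▷ τ((μ⁻² ⊗ ν⁻²) F(w))`, where `τ` is the flip.

The dimodule condition and the `β`-invariance of the form give `F(t ▷ w) = (α ⊗ α)(t) ▷ F(w)`
(`formContract_pairAct`). Put `h = α(g)`. Pulling `α²(g)` through `μ⁻² ⊗ ν⁻²` leaves `g`, hence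
`C(h · w) = τ(R) ▷ (τΔ(g) ▷ z)` with `z = τ((μ⁻² ⊗ ν⁻²) F(w))`. Since `R = (α ⊗ α)(R)`,
Hom-associativity of the action (`pairAct_pairAct`) turns this into
`τ(R Δ(g)) ▷ (ν ⊗ μ)(z)`. Now `R Δ(g) = τ(Δ(g)) R`, and undoing the same steps yields
`Δ(h) ▷ (τ(R) ▷ z) = h · C(w)`.
-/

open TensorProduct

section BraidLinear

variable {k H B M N : Type*} [Field k]
variable [AddCommGroup H] [Module k H] [AddCommGroup B] [Module k B]
variable [AddCommGroup M] [Module k M] [AddCommGroup N] [Module k N]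

/-- The componentwise action `(a ⊗ b) ▷ (x ⊗ y) = a·x ⊗ b·y` of `H ⊗ H` on `M ⊗ N`. -/
noncomputable def pairAct (actM : H →ₗ[k] M →ₗ[k] M) (actN : H →ₗ[k] N →ₗ[k] N) :
    H ⊗[k] H →ₗ[k] M ⊗[k] N →ₗ[k] M ⊗[k] N :=
  TensorProduct.curry (TensorProduct.map (TensorProduct.lift actM) (TensorProduct.lift actN) ∘ₗ
    (TensorProduct.tensorTensorTensorComm k H H M N).toLinearMap)

@[simp] lemma pairAct_tmul (actM : H →ₗ[k] M →ₗ[k] M) (actN : H →ₗ[k] N →ₗ[k] N)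
    (a b : H) (x : M) (y : N) :
    pairAct actM actN (a ⊗ₜ b) (x ⊗ₜ y) = actM a x ⊗ₜ actN b y := by
  simp [pairAct]

/-- The componentwise product `(a ⊗ b)(c ⊗ d) = ac ⊗ bd` on `H ⊗ H`. -/
noncomputable def pairMul (mul : H →ₗ[k] H →ₗ[k] H) :
    H ⊗[k] H →ₗ[k] H ⊗[k] H →ₗ[k] H ⊗[k] H :=
  pairAct mul mul

/-- The contraction `F(m ⊗ n) = ⟨m₋₁|n₋₁⟩ m₀ ⊗ n₀`. -/
noncomputable def formContract (form : B →ₗ[k] B →ₗ[k] k)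
    (coactM : M →ₗ[k] B ⊗[k] M) (coactN : N →ₗ[k] B ⊗[k] N) : M ⊗[k] N →ₗ[k] M ⊗[k] N :=
  (TensorProduct.lid k (M ⊗[k] N)).toLinearMap ∘ₗ
    TensorProduct.map (TensorProduct.lift form)
      (LinearMap.id : M ⊗[k] N →ₗ[k] M ⊗[k] N) ∘ₗ
    (TensorProduct.tensorTensorTensorComm k B M B N).toLinearMap ∘ₗ
    TensorProduct.map coactM coactN

/-- The flip exchanges the two factors of the componentwise action. -/
lemma comm_pairAct (actM : H →ₗ[k] M →ₗ[k] M) (actN : H →ₗ[k] N →ₗ[k] N)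
    (t : H ⊗[k] H) (z : M ⊗[k] N) :
    TensorProduct.comm k M N (pairAct actM actN t z)
      = pairAct actN actM (TensorProduct.comm k H H t) (TensorProduct.comm k M N z) := by
  induction t with
  | zero => simp
  | add s t hs ht => simp only [map_add, LinearMap.add_apply, hs, ht]
  | tmul a b =>
    induction z with
    | zero => simp
    | add y z hy hz => simp only [map_add, hy, hz]
    | tmul x y => simp

/-- Maps intertwining the actions along `f : H → H` intertwine the componentwise actions. -/
lemma map_pairAct (actM : H →ₗ[k] M →ₗ[k] M) (actN : H →ₗ[k] N →ₗ[k] N)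
    (f : H →ₗ[k] H) (p : M →ₗ[k] M) (q : N →ₗ[k] N)
    (hp : ∀ a x, p (actM a x) = actM (f a) (p x)) (hq : ∀ a x, q (actN a x) = actN (f a) (q x))
    (t : H ⊗[k] H) (z : M ⊗[k] N) :
    TensorProduct.map p q (pairAct actM actN t z)
      = pairAct actM actN (TensorProduct.map f f t) (TensorProduct.map p q z) := by
  induction t with
  | zero => simp
  | add s t hs ht => simp only [map_add, LinearMap.add_apply, hs, ht]
  | tmul a b =>
    induction z with
    | zero => simp
    | add y z hy hz => simp only [map_add, hy, hz]
    | tmul x y => simp [hp, hq]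

/-- Hom-associativity of the componentwise action: `α(s) ▷ (t ▷ z) = (s t) ▷ (μ ⊗ ν)(z)`. -/
lemma pairAct_pairAct (mul : H →ₗ[k] H →ₗ[k] H)
    (actM : H →ₗ[k] M →ₗ[k] M) (actN : H →ₗ[k] N →ₗ[k] N)
    (f : H →ₗ[k] H) (p : M →ₗ[k] M) (q : N →ₗ[k] N)
    (hp : ∀ a b x, actM (f a) (actM b x) = actM (mul a b) (p x))
    (hq : ∀ a b x, actN (f a) (actN b x) = actN (mul a b) (q x))
    (s t : H ⊗[k] H) (z : M ⊗[k] N) :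
    pairAct actM actN (TensorProduct.map f f s) (pairAct actM actN t z)
      = pairAct actM actN (pairMul mul s t) (TensorProduct.map p q z) := by
  induction s with
  | zero => simp
  | add s t hs ht => simp only [map_add, LinearMap.add_apply, hs, ht]
  | tmul a b =>
    induction t with
    | zero => simp
    | add s t hs ht => simp only [map_add, LinearMap.add_apply, hs, ht]
    | tmul c d =>
      induction z with
      | zero => simp
      | add y z hy hz => simp only [map_add, hy, hz]
      | tmul x y => simp [pairMul, hp, hq]

/-- `F(t ▷ w) = (α ⊗ α)(t) ▷ F(w)`: the coactions are `H`-linear up to the twists, and the form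
does not see the twist `β` of its arguments. -/
lemma formContract_pairAct {HA : HomBialgebra k H} (BC : CQTHomHopf k B)
    (LM : LongDimodule HA BC.toHomBialgebra M) (LN : LongDimodule HA BC.toHomBialgebra N)
    (t : H ⊗[k] H) (w : M ⊗[k] N) :
    formContract BC.form LM.coact LN.coact (pairAct LM.act LN.act t w)
      = pairAct LM.act LN.act (TensorProduct.map HA.auto.toLinearMap HA.auto.toLinearMap t)
          (formContract BC.form LM.coact LN.coact w) := by
  induction t with
  | zero => simp
  | add s t hs ht => simp only [map_add, LinearMap.add_apply, hs, ht]
  | tmul a b =>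
    induction w with
    | zero => simp
    | add y z hy hz => simp only [map_add, hy, hz]
    | tmul x y =>
      simp only [pairAct_tmul, formContract, LinearMap.comp_apply, TensorProduct.map_tmul,
        LM.compat, LN.compat, LinearEquiv.coe_coe]
      generalize LM.coact x = u
      generalize LN.coact y = v
      induction u with
      | zero => simp
      | add u u' hu hu' => simp only [map_add, TensorProduct.add_tmul, hu, hu']
      | tmul c m =>
        induction v with
        | zero => simp
        | add v v' hv hv' => simp only [map_add, TensorProduct.tmul_add, hv, hv']
        | tmul d n => simp [BC.cha5]

lemma tAct_eq_pairAct (comul : H →ₗ[k] H ⊗[k] H)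
    (actM : H →ₗ[k] M →ₗ[k] M) (actN : H →ₗ[k] N →ₗ[k] N) (h : H) :
    tAct comul actM actN h = pairAct actM actN (comul h) := by
  ext x y
  simp [tAct, pairAct]

lemma braidL_apply (R : H ⊗[k] H) (form : B →ₗ[k] B →ₗ[k] k)
    (actM : H →ₗ[k] M →ₗ[k] M) (actN : H →ₗ[k] N →ₗ[k] N)
    (coactM : M →ₗ[k] B ⊗[k] M) (coactN : N →ₗ[k] B ⊗[k] N)
    (aM : M ≃ₗ[k] M) (aN : N ≃ₗ[k] N) (w : M ⊗[k] N) :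
    braidL R form actM actN coactM coactN aM aN w
      = pairAct actN actM (TensorProduct.comm k H H R) (TensorProduct.comm k M N
          (TensorProduct.map (aM.trans aM).symm.toLinearMap (aN.trans aN).symm.toLinearMap
            (formContract form coactM coactN w))) :=
  rfl

end BraidLinear

/-- the Long braiding
`C(m ⊗ n) = ⟨m₋₁|n₋₁⟩ R²·ν⁻²(n₀) ⊗ R¹·μ⁻²(m₀)` is left `H`-linear for the diagonal
actions. -/
theorem braid_H_linear
    {k H B M N : Type*} [Field k]
    [AddCommGroup H] [Module k H] [AddCommGroup B] [Module k B]
    [AddCommGroup M] [Module k M] [AddCommGroup N] [Module k N]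
    (HQ : QTHomHopf k H) (BC : CQTHomHopf k B)
    (LM : LongDimodule HQ.toHomBialgebra BC.toHomBialgebra M)
    (LN : LongDimodule HQ.toHomBialgebra BC.toHomBialgebra N) :
    ∀ h : H,
      braidL HQ.R BC.form LM.act LN.act LM.coact LN.coact LM.auto LN.auto ∘ₗ
          tAct HQ.comul LM.act LN.act h
        = tAct HQ.comul LN.act LM.act h ∘ₗ
            braidL HQ.R BC.form LM.act LN.act LM.coact LN.coact LM.auto LN.auto := by
  intro h
  obtain ⟨g, rfl⟩ := HQ.auto.surjective h
  refine LinearMap.ext fun w => ?_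
  simp only [LinearMap.comp_apply, tAct_eq_pairAct, braidL_apply, formContract_pairAct]
  generalize formContract BC.form LM.coact LN.coact w = w
  have hM : ∀ a x, (LM.auto.trans LM.auto).symm.toLinearMap (LM.act a x)
      = LM.act ((HQ.auto.trans HQ.auto).symm.toLinearMap a)
        ((LM.auto.trans LM.auto).symm.toLinearMap x) := by
    intro a x
    simp [LinearEquiv.symm_apply_eq, LM.auto_act]
  have hN : ∀ a x, (LN.auto.trans LN.auto).symm.toLinearMap (LN.act a x)
      = LN.act ((HQ.auto.trans HQ.auto).symm.toLinearMap a)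
        ((LN.auto.trans LN.auto).symm.toLinearMap x) := by
    intro a x
    simp [LinearEquiv.symm_apply_eq, LN.auto_act]
  rw [map_pairAct _ _ _ _ _ hM hN, comm_pairAct]
  generalize TensorProduct.comm k M N (TensorProduct.map _ _ w) = z
  have hα : TensorProduct.map (HQ.auto.trans HQ.auto).symm.toLinearMap
        (HQ.auto.trans HQ.auto).symm.toLinearMap
        (TensorProduct.map HQ.auto.toLinearMap HQ.auto.toLinearMap (HQ.comul (HQ.auto g)))
      = HQ.comul g := by
    rw [HQ.comul_auto]
    generalize HQ.comul g = t
    induction t with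
    | zero => simp
    | add s t hs ht => simp only [map_add, hs, ht]
    | tmul a b => simp
  have hR : TensorProduct.comm k H H HQ.R
      = TensorProduct.map HQ.auto.toLinearMap HQ.auto.toLinearMap
          (TensorProduct.comm k H H HQ.R) := by
    rw [TensorProduct.map_comm, HQ.qha5]
  -- The flipped form of `R Δ(g) = τ(Δ(g)) R`.
  have hRΔ : pairMul HQ.mul (TensorProduct.comm k H H HQ.R)
        (TensorProduct.comm k H H (HQ.comul g))
      = pairMul HQ.mul (HQ.comul g) (TensorProduct.comm k H H HQ.R) := by
    have h4 : pairMul HQ.mul (TensorProduct.comm k H H (HQ.comul g)) HQ.R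
        = pairMul HQ.mul HQ.R (HQ.comul g) := HQ.qha4 g
    have h5 := congrArg (TensorProduct.comm k H H) h4
    simp only [pairMul, comm_pairAct] at h5 ⊢
    rw [← h5, TensorProduct.comm_comm]
  rw [hα]
  nth_rewrite 1 [hR]
  rw [HQ.comul_auto,
    pairAct_pairAct HQ.mul _ _ _ LN.auto.toLinearMap LM.auto.toLinearMap LN.act_act LM.act_act,
    pairAct_pairAct HQ.mul _ _ _ LN.auto.toLinearMap LM.auto.toLinearMap LN.act_act LM.act_act,
    hRΔ]
end

section
/- Let (H,α,R) be a quasitriangular Hom-Hopf algebra, (B,β,⟨|⟩) a coquasitriangular Hom-Hopf algebra, and (M,μ_M),(N,ν_N) (H,B)-Hom-Long dimodules. Then the map C_{M,N}:M⊗N→N⊗M, C_{M,N}(m⊗n)=⟨m₋₁|n₋₁⟩ R²·ν_N⁻²(n₀)⊗R¹·μ_M⁻²(m₀), is left B-colinear for the tensor-product coactions: ρ_{N⊗M}∘C_{M,N}=(id_B⊗C_{M,N})∘ρ_{M⊗N}, where for Long dimodules X,Y the coaction on X⊗Y is ρ(x⊗y)=β⁻²(x₋₁y₋₁)⊗(x₀⊗y₀).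 -/
/-!
The braiding factors as `C = C_R ∘ C_f`, where `C_f (m ⊗ n) = ⟨m₋₁|n₋₁⟩ m₀ ⊗ n₀` involves only the
coactions and `C_R (m ⊗ n) = R² · ν⁻²(n) ⊗ R¹ · μ⁻²(m)` only the actions. Put
`ρ'(m ⊗ n) = β⁻³(n₋₁ m₋₁) ⊗ (m₀ ⊗ n₀)`.

* The Long compatibility `ρ(h · m) = β(m₋₁) ⊗ α(h) · m₀` and `(α ⊗ α)(R) = R` give
  `ρ_{N ⊗ M} ∘ C_R = (id ⊗ C_R) ∘ ρ'` (`tCoact_braidQT`).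
* Hom-coassociativity reads `m₋₁ ⊗ m₀₋₁ ⊗ m₀₀ = β⁻¹(m₋₁₁) ⊗ m₋₁₂ ⊗ μ(m₀)`. Hence `ρ' ∘ C_f` has
  `B`-component `⟨m₋₁₁|n₋₁₁⟩ β⁻³(n₋₁₂ m₋₁₂)`, while `(id ⊗ C_f) ∘ ρ_{M ⊗ N}` has
  `B`-component `β⁻³(m₋₁₁ n₋₁₁) ⟨m₋₁₂|n₋₁₂⟩`, and these agree by
  `⟨h₁|g₁⟩ g₂ h₂ = h₁ g₁ ⟨h₂|g₂⟩` (`opCoact_formPart`).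

Composing the two identities yields the colinearity of `C`.
-/

open TensorProduct

section Colinear

variable {k H B M N : Type*} [Field k]
variable [AddCommGroup H] [Module k H] [AddCommGroup B] [Module k B]
variable [AddCommGroup M] [Module k M] [AddCommGroup N] [Module k N]

/-- `(b ⊗ m) ⊗ (c ⊗ n) ↦ ⟨b|c⟩ m ⊗ n`. -/
noncomputable def formPair (form : B →ₗ[k] B →ₗ[k] k) :
    (B ⊗[k] M) ⊗[k] (B ⊗[k] N) →ₗ[k] M ⊗[k] N :=
  (TensorProduct.lid k (M ⊗[k] N)).toLinearMap ∘ₗ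
    TensorProduct.map (TensorProduct.lift form)
      (LinearMap.id : M ⊗[k] N →ₗ[k] M ⊗[k] N) ∘ₗ
    (TensorProduct.tensorTensorTensorComm k B M B N).toLinearMap

/-- `(b ⊗ m) ⊗ (c ⊗ n) ↦ f(bc) ⊗ (m ⊗ n)`; the twist `f` is a power of `β⁻¹` below. -/
noncomputable def mulPair (mulB : B →ₗ[k] B →ₗ[k] B) (f : B →ₗ[k] B) :
    (B ⊗[k] M) ⊗[k] (B ⊗[k] N) →ₗ[k] B ⊗[k] (M ⊗[k] N) :=
  (TensorProduct.map (f ∘ₗ TensorProduct.lift mulB)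
      (LinearMap.id : M ⊗[k] N →ₗ[k] M ⊗[k] N)) ∘ₗ
    (TensorProduct.tensorTensorTensorComm k B M B N).toLinearMap

@[simp] lemma formPair_tmul (form : B →ₗ[k] B →ₗ[k] k) (b c : B) (m : M) (n : N) :
    formPair form ((b ⊗ₜ[k] m) ⊗ₜ[k] (c ⊗ₜ[k] n)) = form b c • (m ⊗ₜ[k] n) := by
  simp [formPair]

@[simp] lemma mulPair_tmul (mulB : B →ₗ[k] B →ₗ[k] B) (f : B →ₗ[k] B) (b c : B) (m : M) (n : N) :
    mulPair mulB f ((b ⊗ₜ[k] m) ⊗ₜ[k] (c ⊗ₜ[k] n)) = f (mulB b c) ⊗ₜ[k] (m ⊗ₜ[k] n) := by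
  simp [mulPair]

/-- Linear maps on `(B ⊗ M) ⊗ (C ⊗ N)` that agree on pure tensors agree at `x ⊗ y` for arbitrary
`x` and `y`, such as values of a coaction. -/
lemma eq_of_pure {C P : Type*} [AddCommGroup C] [Module k C] [AddCommGroup P] [Module k P]
    (F G : (B ⊗[k] M) ⊗[k] (C ⊗[k] N) →ₗ[k] P)
    (h : ∀ b m c n, F ((b ⊗ₜ[k] m) ⊗ₜ[k] (c ⊗ₜ[k] n)) = G ((b ⊗ₜ[k] m) ⊗ₜ[k] (c ⊗ₜ[k] n)))
    (x : B ⊗[k] M) (y : C ⊗[k] N) : F (x ⊗ₜ[k] y) = G (x ⊗ₜ[k] y) := by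
  have : F = G := by
    ext b m c n
    exact h b m c n
  rw [this]

lemma LongDimodule.coact_symm {HA : HomBialgebra k H} {BA : HomBialgebra k B}
    (L : LongDimodule HA BA M) (m : M) :
    L.coact (L.auto.symm m)
      = TensorProduct.map BA.auto.symm.toLinearMap L.auto.symm.toLinearMap (L.coact m) := by
  obtain ⟨m, rfl⟩ := L.auto.surjective m
  rw [L.coact_auto, LinearEquiv.symm_apply_apply, TensorProduct.map_map]
  simp

lemma HomBialgebra.symm_mul (BA : HomBialgebra k B) (a b : B) :
    BA.auto.symm (BA.mul a b) = BA.mul (BA.auto.symm a) (BA.auto.symm b) := by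
  rw [LinearEquiv.symm_apply_eq, BA.auto_mul]
  simp

/-- Hom-coassociativity solved for the iterated coaction:
`m₋₁ ⊗ m₀₋₁ ⊗ m₀₀ = β⁻¹(m₋₁₁) ⊗ m₋₁₂ ⊗ μ(m₀)`. -/
lemma LongDimodule.coact_coact {HA : HomBialgebra k H} {BA : HomBialgebra k B}
    (L : LongDimodule HA BA M) (m : M) :
    TensorProduct.map (LinearMap.id : B →ₗ[k] B) L.coact (L.coact m)
      = TensorProduct.map BA.auto.symm.toLinearMap (LinearMap.id : B ⊗[k] M →ₗ[k] B ⊗[k] M)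
          (TensorProduct.assoc k B B M
            (TensorProduct.map BA.comul L.auto.toLinearMap (L.coact m))) := by
  rw [← L.hom_coassoc, TensorProduct.map_map]
  simp

/-- For an arbitrary `T ∈ H ⊗ H` in place of the R-matrix, moving the coaction past the action of
`T` replaces `T` by `(α ⊗ α)(T)` and twists the `B`-component by `β⁻³`, in the opposite order. -/
lemma tCoact_braidQT_aux {HA : HomBialgebra k H} {BA : HomBialgebra k B}
    (LM : LongDimodule HA BA M) (LN : LongDimodule HA BA N) (T : H ⊗[k] H) (m : M) (n : N) :
    tCoact BA.mul (BA.auto.symm.toLinearMap ∘ₗ BA.auto.symm.toLinearMap) LN.coact LM.coact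
        (braidQT T LM.act LN.act (LM.auto.trans LM.auto) (LN.auto.trans LN.auto) (m ⊗ₜ[k] n))
      = TensorProduct.map (LinearMap.id : B →ₗ[k] B)
          (braidQT (TensorProduct.map HA.auto.toLinearMap HA.auto.toLinearMap T)
            LM.act LN.act (LM.auto.trans LM.auto) (LN.auto.trans LN.auto))
          (mulPair BA.mul.flip (BA.auto.symm.toLinearMap ∘ₗ BA.auto.symm.toLinearMap ∘ₗ
            BA.auto.symm.toLinearMap) (LM.coact m ⊗ₜ[k] LN.coact n)) := by
  induction T with
  | zero =>
    generalize LM.coact m ⊗ₜ[k] LN.coact n = z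
    have h0 : braidQT (0 : H ⊗[k] H) LM.act LN.act (LM.auto.trans LM.auto)
        (LN.auto.trans LN.auto) = 0 := by
      ext; simp [braidQT]
    simp [h0]
  | add S T hS hT =>
    have hadd : ∀ S T : H ⊗[k] H, braidQT (S + T) LM.act LN.act (LM.auto.trans LM.auto)
        (LN.auto.trans LN.auto) = braidQT S LM.act LN.act (LM.auto.trans LM.auto)
        (LN.auto.trans LN.auto) + braidQT T LM.act LN.act (LM.auto.trans LM.auto)
        (LN.auto.trans LN.auto) := by
      intro S T; ext; simp [braidQT]
    simp only [map_add, hadd, LinearMap.add_apply, hS, hT, TensorProduct.map_add_right]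
  | tmul r s =>
    have hL : tCoact BA.mul (BA.auto.symm.toLinearMap ∘ₗ BA.auto.symm.toLinearMap)
        LN.coact LM.coact (braidQT (r ⊗ₜ[k] s) LM.act LN.act (LM.auto.trans LM.auto)
          (LN.auto.trans LN.auto) (m ⊗ₜ[k] n))
        = mulPair BA.mul (BA.auto.symm.toLinearMap ∘ₗ BA.auto.symm.toLinearMap)
          (LN.coact (LN.act s (LN.auto.symm (LN.auto.symm n))) ⊗ₜ[k]
            LM.coact (LM.act r (LM.auto.symm (LM.auto.symm m)))) := by
      simp [tCoact, braidQT, mulPair]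
    rw [hL, LN.compat, LM.compat, LN.coact_symm, LN.coact_symm, LM.coact_symm, LM.coact_symm]
    generalize LM.coact m = x
    generalize LN.coact n = y
    induction x with
    | zero => simp
    | add x x' hx hx' => simp only [map_add, TensorProduct.tmul_add, TensorProduct.add_tmul, hx, hx']
    | tmul b m =>
      induction y with
      | zero => simp
      | add y y' hy hy' =>
        simp only [map_add, TensorProduct.tmul_add, TensorProduct.add_tmul, hy, hy']
      | tmul c n => simp [braidQT, HomBialgebra.symm_mul]

/-- The action part `C_R` of the braiding intertwines the coaction of `N ⊗ M` with
`m ⊗ n ↦ β⁻³(n₋₁ m₋₁) ⊗ (m₀ ⊗ n₀)`. -/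
lemma tCoact_braidQT (HQ : QTHomHopf k H) (BA : HomBialgebra k B)
    (LM : LongDimodule HQ.toHomBialgebra BA M) (LN : LongDimodule HQ.toHomBialgebra BA N) :
    tCoact BA.mul (BA.auto.symm.toLinearMap ∘ₗ BA.auto.symm.toLinearMap) LN.coact LM.coact ∘ₗ
        braidQT HQ.R LM.act LN.act (LM.auto.trans LM.auto) (LN.auto.trans LN.auto)
      = TensorProduct.map (LinearMap.id : B →ₗ[k] B)
          (braidQT HQ.R LM.act LN.act (LM.auto.trans LM.auto) (LN.auto.trans LN.auto)) ∘ₗ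
          mulPair BA.mul.flip (BA.auto.symm.toLinearMap ∘ₗ BA.auto.symm.toLinearMap ∘ₗ
            BA.auto.symm.toLinearMap) ∘ₗ TensorProduct.map LM.coact LN.coact := by
  ext m n
  have h := tCoact_braidQT_aux LM LN HQ.R m n
  rw [HQ.qha5] at h
  simpa using h

/-- The coaction part `C_f` of the braiding intertwines `m ⊗ n ↦ β⁻³(n₋₁ m₋₁) ⊗ (m₀ ⊗ n₀)` with the
tensor-product coaction of `M ⊗ N`: `ρ' ∘ C_f = (id ⊗ C_f) ∘ ρ`, evaluated at `m ⊗ n`. -/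
lemma opCoact_formPart (HA : HomBialgebra k H) (BC : CQTHomHopf k B)
    (LM : LongDimodule HA BC.toHomBialgebra M) (LN : LongDimodule HA BC.toHomBialgebra N)
    (m : M) (n : N) :
    mulPair BC.mul.flip (BC.auto.symm.toLinearMap ∘ₗ BC.auto.symm.toLinearMap ∘ₗ
        BC.auto.symm.toLinearMap) (TensorProduct.map LM.coact LN.coact
          (formPair BC.form (LM.coact m ⊗ₜ[k] LN.coact n)))
      = TensorProduct.map (LinearMap.id : B →ₗ[k] B)
          (formPair BC.form ∘ₗ TensorProduct.map LM.coact LN.coact)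
          (mulPair BC.mul (BC.auto.symm.toLinearMap ∘ₗ BC.auto.symm.toLinearMap)
            (LM.coact m ⊗ₜ[k] LN.coact n)) := by
  -- Both sides depend only on the iterated coactions of `m` and `n`.
  have hL := eq_of_pure
    (mulPair BC.mul.flip (BC.auto.symm.toLinearMap ∘ₗ BC.auto.symm.toLinearMap ∘ₗ
        BC.auto.symm.toLinearMap) ∘ₗ TensorProduct.map LM.coact LN.coact ∘ₗ formPair BC.form)
    (mulPair BC.mul.flip (BC.auto.symm.toLinearMap ∘ₗ BC.auto.symm.toLinearMap ∘ₗ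
        BC.auto.symm.toLinearMap) ∘ₗ formPair BC.form ∘ₗ
      TensorProduct.map (TensorProduct.map LinearMap.id LM.coact)
        (TensorProduct.map LinearMap.id LN.coact))
    (by
      intro b m c n
      simp [formPair])
    (LM.coact m) (LN.coact n)
  have hR := eq_of_pure
    (TensorProduct.map (LinearMap.id : B →ₗ[k] B)
          (formPair BC.form ∘ₗ TensorProduct.map LM.coact LN.coact) ∘ₗ
      mulPair BC.mul (BC.auto.symm.toLinearMap ∘ₗ BC.auto.symm.toLinearMap))
    (TensorProduct.map (LinearMap.id : B →ₗ[k] B) (formPair BC.form) ∘ₗ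
      mulPair BC.mul (BC.auto.symm.toLinearMap ∘ₗ BC.auto.symm.toLinearMap) ∘ₗ
      TensorProduct.map (TensorProduct.map LinearMap.id LM.coact)
        (TensorProduct.map LinearMap.id LN.coact))
    (by
      intro b m c n
      simp [mulPair])
    (LM.coact m) (LN.coact n)
  simp only [LinearMap.comp_apply, TensorProduct.map_tmul] at hL hR
  rw [hL, hR, LM.coact_coact, LN.coact_coact]
  have hform : ∀ a b : B, BC.form (BC.auto.symm a) (BC.auto.symm b) = BC.form a b := by
    intro a b
    rw [← BC.cha5]
    simp
  generalize LM.coact m = x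
  generalize LN.coact n = y
  induction x with
  | zero => simp
  | add x x' hx hx' => simp only [map_add, TensorProduct.add_tmul, hx, hx']
  | tmul b m =>
    induction y with
    | zero => simp
    | add y y' hy hy' => simp only [map_add, TensorProduct.tmul_add, hy, hy']
    | tmul c n =>
      -- Each side is `K` applied to the corresponding side of the commutation axiom `cha3`.
      let K : B →ₗ[k] B ⊗[k] (M ⊗[k] N) :=
        (TensorProduct.mk k B (M ⊗[k] N)).flip (LM.auto m ⊗ₜ[k] LN.auto n) ∘ₗ
          BC.auto.symm.toLinearMap ∘ₗ BC.auto.symm.toLinearMap ∘ₗ BC.auto.symm.toLinearMap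
      have h3 := congrArg K (BC.cha3 b c)
      simp only [TensorProduct.map_tmul, LinearEquiv.coe_coe]
      refine Eq.trans ?_ (h3.trans ?_)
      · generalize BC.comul b = X
        generalize BC.comul c = Y
        induction X with
        | zero => simp
        | add x x' hx hx' => simp only [map_add, TensorProduct.add_tmul, hx, hx']
        | tmul b₁ b₂ =>
          induction Y with
          | zero => simp
          | add y y' hy hy' =>
            simp only [map_add, TensorProduct.tmul_add, TensorProduct.add_tmul, hy, hy']
          | tmul c₁ c₂ => simp [K, hform, TensorProduct.smul_tmul']
      · generalize BC.comul b = X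
        generalize BC.comul c = Y
        induction X with
        | zero => simp
        | add x x' hx hx' => simp only [map_add, TensorProduct.add_tmul, hx, hx']
        | tmul b₁ b₂ =>
          induction Y with
          | zero => simp
          | add y y' hy hy' =>
            simp only [map_add, TensorProduct.tmul_add, TensorProduct.add_tmul, hy, hy']
          | tmul c₁ c₂ => simp [K, HomBialgebra.symm_mul]

end Colinear

/-- the Long braiding is left `B`-colinear for the tensor-product
coactions `ρ(x ⊗ y) = β⁻²(x₋₁ y₋₁) ⊗ (x₀ ⊗ y₀)`. -/
theorem braid_B_colinear
    {k H B M N : Type*} [Field k]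
    [AddCommGroup H] [Module k H] [AddCommGroup B] [Module k B]
    [AddCommGroup M] [Module k M] [AddCommGroup N] [Module k N]
    (HQ : QTHomHopf k H) (BC : CQTHomHopf k B)
    (LM : LongDimodule HQ.toHomBialgebra BC.toHomBialgebra M)
    (LN : LongDimodule HQ.toHomBialgebra BC.toHomBialgebra N) :
    tCoact BC.mul (BC.auto.symm.toLinearMap ∘ₗ BC.auto.symm.toLinearMap)
        LN.coact LM.coact ∘ₗ
        braidL HQ.R BC.form LM.act LN.act LM.coact LN.coact LM.auto LN.auto
      = TensorProduct.map (LinearMap.id : B →ₗ[k] B)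
            (braidL HQ.R BC.form LM.act LN.act LM.coact LN.coact LM.auto LN.auto) ∘ₗ
          tCoact BC.mul (BC.auto.symm.toLinearMap ∘ₗ BC.auto.symm.toLinearMap)
            LM.coact LN.coact := by
  ext m n
  have hA := tCoact_braidQT HQ BC.toHomBialgebra LM LN
  have hB := opCoact_formPart HQ.toHomBialgebra BC LM LN m n
  have hC : braidL HQ.R BC.form LM.act LN.act LM.coact LN.coact LM.auto LN.auto
      = braidQT HQ.R LM.act LN.act (LM.auto.trans LM.auto) (LN.auto.trans LN.auto) ∘ₗ
        formPair BC.form ∘ₗ TensorProduct.map LM.coact LN.coact := rfl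
  have hD : tCoact BC.mul (BC.auto.symm.toLinearMap ∘ₗ BC.auto.symm.toLinearMap)
      LM.coact LN.coact = mulPair BC.mul (BC.auto.symm.toLinearMap ∘ₗ BC.auto.symm.toLinearMap) ∘ₗ
        TensorProduct.map LM.coact LN.coact := rfl
  have hA' := LinearMap.congr_fun hA (formPair BC.form (LM.coact m ⊗ₜ[k] LN.coact n))
  simp only [LinearMap.comp_apply] at hA'
  rw [hB, TensorProduct.map_map] at hA'
  rw [hC, hD]
  exact hA'
end
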